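/- arXiv:1509.02563 — 2 statements merged into one kernel-verified Lean document; each statement's English description precedes it below -/
import Mathlib

section
/- Every planar triangulation on n ≥ 4 vertices contains at most n − 4 separating triangles. -/
/-- A straight-line (plane) embedding of a simple graph: vertices map injectively
to points of the plane, no vertex lies on the interior of an edge, and two
distinct edges intersect only in shared endpoints. -/
def IsPlanarEmbedding {n : ℕ} (G : SimpleGraph (Fin n))
    (p : Fin n → EuclideanSpace ℝ (Fin 2)) : Prop :=
  Function.Injective p ∧
  (∀ u v w : Fin n, G.Adj u v → p w ∈ segment ℝ (p u) (p v) → w = u ∨ w = v) ∧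
  (∀ u v x y : Fin n, G.Adj u v → G.Adj x y → ({u, v} : Set (Fin n)) ≠ {x, y} →
    segment ℝ (p u) (p v) ∩ segment ℝ (p x) (p y) ⊆
      p '' (({u, v} : Set (Fin n)) ∩ {x, y}))

/-- A graph is planar if it admits a straight-line plane embedding (Fáry). -/
def IsPlanar {n : ℕ} (G : SimpleGraph (Fin n)) : Prop :=
  ∃ p : Fin n → EuclideanSpace ℝ (Fin 2), IsPlanarEmbedding G p

/-- A (planar) triangulation is a maximal simple planar graph. -/
def IsTriangulation {n : ℕ} (G : SimpleGraph (Fin n)) : Prop :=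
  IsPlanar G ∧ ∀ u v : Fin n, u ≠ v → ¬ G.Adj u v →
    ¬ IsPlanar (G ⊔ SimpleGraph.fromEdgeSet {s(u, v)})

/-- A separating triangle: three mutually adjacent vertices whose removal
disconnects the graph. -/
def IsSepTriangle {n : ℕ} (G : SimpleGraph (Fin n)) (a b c : Fin n) : Prop :=
  G.Adj a b ∧ G.Adj b c ∧ G.Adj a c ∧
  ¬ (G.induce {v : Fin n | v ∉ ({a, b, c} : Set (Fin n))}).Connected

/-- 4-connectivity: no vertex cutset of size at most 3. -/
def FourConnected {n : ℕ} (G : SimpleGraph (Fin n)) : Prop :=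
  ∀ S : Finset (Fin n), S.card ≤ 3 → (G.induce {v : Fin n | v ∉ S}).Connected

/-!
Draw the triangulation with straight edges. Such a drawing is saturated: no edge can be added to it
without moving vertices. In a saturated drawing, let `C` be a convex region such that every edge
meeting `C` has an end in `C`. Then the vertices in `C` induce a connected graph: on the segment
between two of them, replace each crossing edge by an end in `C`. Between consecutive crossings
nothing blocks the view, and sweeping from one crossing edge to the other meets vertices that see
each other, which are adjacent by saturation.

Hence a separating triangle `T` has vertices outside it, as its interior is such a region. It also
has vertices inside it. Otherwise the rest of the graph lies in the three half-planes beyond the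
sides of `T`, each of which induces a connected graph, so some half-plane contains vertices, but
none that lie in another half-plane or are adjacent to a vertex in another one. A projective map
that fixes the side of `T` moves these vertices into `T` and yields a drawing of the same graph. Now
the interior of `T` together with the opposite corner of `T` is a region as above, so this corner
has a neighbour inside `T`; but it had none beyond the opposite side.

The separating triangles are a laminar family. Let the depth of a vertex be the number of separating
triangles around it. An inner vertex of minimal depth determines the separating triangle it is
chosen from, because a triangle strictly inside would have a corner of smaller depth than its own
inner vertices. So there are at most as many separating triangles as vertices of positive depth, and
the corners of a maximal separating triangle together with some vertex outside it are four vertices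
of depth zero.
-/

open Set

/-! ### Coordinates in a triangle -/

section

variable {E : Type*} [AddCommGroup E] [Module ℝ E]

lemma exists_first_zero {ι : Type*} [Finite ι] (f : ι → E →ᵃ[ℝ] ℝ) {x y : E}
    (hx : ∀ i, 0 < f i x) (hy : ∃ i, f i y < 0) :
    ∃ z ∈ openSegment ℝ x y, (∀ j, 0 ≤ f j z) ∧ ∃ i, f i y < 0 ∧ f i z = 0 := by
  have hfin : {i | f i y < 0}.Finite := toFinite _
  obtain ⟨i, hi, hmin⟩ := exists_min_image _ (fun i => f i x / (f i x - f i y)) hfin hy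
  have hi : f i y < 0 := hi
  have hd : 0 < f i x - f i y := by linarith [hx i]
  set t := f i x / (f i x - f i y) with ht
  have ht0 : 0 < t := div_pos (hx i) hd
  have ht1 : t < 1 := by rw [ht, div_lt_one hd]; linarith
  have hval (j : ι) : f j ((1 - t) • x + t • y) = (1 - t) * f j x + t * f j y :=
    Convex.combo_affine_apply (by ring)
  refine ⟨(1 - t) • x + t • y, ⟨1 - t, t, by linarith, ht0, by ring, rfl⟩, fun j => ?_, i, hi, ?_⟩
  · rw [hval]
    have hxj := hx j
    rcases lt_or_ge (f j y) 0 with hj | hj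
    · have := hmin j hj
      rw [le_div_iff₀ (by linarith)] at this
      linarith
    · have : 0 < 1 - t := by linarith
      positivity
  · rw [hval, ht]
    field_simp
    ring

lemma pos_or_pos_of_mem_openSegment (f : E →ᵃ[ℝ] ℝ) {x y z : E} (hz : z ∈ openSegment ℝ x y)
    (h₀ : 0 ≤ f z) (hne : f x ≠ 0 ∨ f z ≠ 0) : 0 < f x ∨ 0 < f y := by
  obtain ⟨s, t, hs, ht, hst, rfl⟩ := hz
  rw [Convex.combo_affine_apply hst, smul_eq_mul, smul_eq_mul] at *
  by_contra! h
  have hx : s * f x ≤ 0 := mul_nonpos_of_nonneg_of_nonpos hs.le h.1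
  have hy : t * f y ≤ 0 := mul_nonpos_of_nonneg_of_nonpos ht.le h.2
  have hx₀ : s * f x = 0 := by linarith
  have hy₀ : t * f y = 0 := by linarith
  have : f x ≠ 0 := hne.resolve_right (by simp [hx₀, hy₀])
  simp_all [hs.ne']

lemma not_collinear_of_affineMap (f : E →ᵃ[ℝ] ℝ) {x y z : E} (hxy : x ≠ y) (hx : f x = 0)
    (hy : f y = 0) (hz : f z ≠ 0) : ¬ Collinear ℝ {x, y, z} := by
  intro h
  obtain ⟨r, rfl⟩ := mem_affineSpan_pair_iff_exists_lineMap_eq.mp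
    (h.mem_affineSpan_of_mem_of_ne (by simp) (by simp) (p₃ := z) (by simp) hxy)
  simp [AffineMap.apply_lineMap, hx, hy] at hz

lemma openSegment_subset_openSegment {x y x' y' : E} (hx : x' ∈ segment ℝ x y)
    (hy : y' ∈ segment ℝ x y) (hne : x' ≠ y') : openSegment ℝ x' y' ⊆ openSegment ℝ x y := by
  rw [segment_eq_image_lineMap] at hx hy
  obtain ⟨a, ⟨ha0, ha1⟩, rfl⟩ := hx
  obtain ⟨b, ⟨hb0, hb1⟩, rfl⟩ := hy
  rw [← image_openSegment, openSegment_eq_image_lineMap ℝ x y,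
    openSegment_eq_Ioo' (by rintro rfl; exact hne rfl)]
  exact image_mono (Ioo_subset_Ioo (le_min ha0 hb0) (max_le ha1 hb1))

lemma left_mem_affineSpan_pair_of_mem_openSegment {x y z : E} (hz : z ∈ openSegment ℝ x y) :
    x ∈ line[ℝ, z, y] := by
  obtain ⟨s, t, hs, -, hst, rfl⟩ := hz
  refine mem_affineSpan_pair_iff_exists_lineMap_eq.2 ⟨-t / s, ?_⟩
  rw [AffineMap.lineMap_apply_module]
  have h1 : (1 - -t / s) * s = 1 := by field_simp; linarith
  have h2 : (1 - -t / s) * t + -t / s = 0 := by field_simp; linear_combination t * hst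
  linear_combination (norm := module) h1 • x + h2 • y

lemma eq_of_mem_affineSpan_pair_of_not_collinear {o q x y z z' : E}
    (hx : ¬ Collinear ℝ {o, q, x}) (hz : z ∈ line[ℝ, o, q]) (hz' : z' ∈ line[ℝ, o, q])
    (hzx : z ∈ line[ℝ, x, y]) (hzx' : z' ∈ line[ℝ, x, y]) : z = z' := by
  by_contra hne
  have hxz : x ∈ line[ℝ, z, z'] :=
    (collinear_triple_of_mem_affineSpan_pair hzx hzx'
      (left_mem_affineSpan_pair ℝ x y)).mem_affineSpan_of_mem_of_ne
        (by simp) (by simp) (by simp) hne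
  exact hx (collinear_triple_of_mem_affineSpan_pair (left_mem_affineSpan_pair ℝ o q)
    (right_mem_affineSpan_pair ℝ o q) (affineSpan_pair_le_of_mem_of_mem hz hz' hxz))

lemma segment_subset_affineSpan_pair (x y : E) : segment ℝ x y ⊆ line[ℝ, x, y] :=
  (AffineSubspace.convex _).segment_subset (left_mem_affineSpan_pair ℝ x y)
    (right_mem_affineSpan_pair ℝ x y)

lemma apply_eq_sum_coord {ι : Type*} [Fintype ι] (b : AffineBasis ι ℝ E) (f : E →ᵃ[ℝ] ℝ) (x : E) :
    f x = ∑ i, b.coord i x * f (b i) := by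
  conv_lhs => rw [← b.affineCombination_coord_eq_self x]
  rw [Finset.map_affineCombination _ _ _ (b.sum_coord_apply_eq_one x),
    Finset.affineCombination_eq_linear_combination _ _ _ (b.sum_coord_apply_eq_one x)]
  simp

variable (b : AffineBasis (Fin 3) ℝ E)

lemma forall_fin_three_cyclic {P : Fin 3 → Prop} (l : Fin 3) :
    (∀ i, P i) ↔ P l ∧ P (l + 1) ∧ P (l + 2) := by
  fin_cases l <;> simp [Fin.forall_fin_succ] <;> tauto

lemma coord_add_coord_add_coord (l : Fin 3) (x : E) :
    b.coord l x + b.coord (l + 1) x + b.coord (l + 2) x = 1 := by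
  rw [← b.sum_coord_apply_eq_one x, Fin.sum_univ_three]
  fin_cases l <;> simp <;> ring

lemma eq_lineMap_of_coord_eq_zero {l : Fin 3} {x : E} (h : b.coord l x = 0) :
    x = AffineMap.lineMap (b (l + 1)) (b (l + 2)) (b.coord (l + 2) x) := by
  have hsum := coord_add_coord_add_coord b l x
  refine b.ext_elem ((forall_fin_three_cyclic l).2 ?_)
  simpa [AffineMap.apply_lineMap, AffineMap.lineMap_apply_ring, b.coord_apply, h] using
    (by linarith : b.coord (l + 1) x = 1 - b.coord (l + 2) x)

lemma collinear_of_coord_eq_zero {l : Fin 3} {x y z : E} (hx : b.coord l x = 0)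
    (hy : b.coord l y = 0) (hz : b.coord l z = 0) : Collinear ℝ {x, y, z} := by
  have hline {w : E} (hw : b.coord l w = 0) : w ∈ line[ℝ, b (l + 1), b (l + 2)] :=
    eq_lineMap_of_coord_eq_zero b hw ▸ AffineMap.lineMap_mem_affineSpan_pair _ _ _
  exact collinear_triple_of_mem_affineSpan_pair (hline hx) (hline hy) (hline hz)

lemma mem_segment_of_coord_eq_zero {l : Fin 3} {x : E} (h : b.coord l x = 0)
    (h1 : 0 ≤ b.coord (l + 1) x) (h2 : 0 ≤ b.coord (l + 2) x) :
    x ∈ segment ℝ (b (l + 1)) (b (l + 2)) := by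
  have := coord_add_coord_add_coord b l x
  rw [eq_lineMap_of_coord_eq_zero b h, segment_eq_image_lineMap]
  exact mem_image_of_mem _ ⟨h2, by linarith⟩

lemma mem_openSegment_of_coord_eq_zero {l : Fin 3} {x : E} (h : b.coord l x = 0)
    (h1 : 0 < b.coord (l + 1) x) (h2 : 0 < b.coord (l + 2) x) :
    x ∈ openSegment ℝ (b (l + 1)) (b (l + 2)) := by
  have := coord_add_coord_add_coord b l x
  rw [eq_lineMap_of_coord_eq_zero b h, openSegment_eq_image_lineMap]
  exact mem_image_of_mem _ ⟨h2, by linarith⟩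

/-- The interior of the triangle with corners `b 0`, `b 1`, `b 2`. -/
def openTriangle (b : AffineBasis (Fin 3) ℝ E) : Set E := {x | ∀ i, 0 < b.coord i x}

lemma mem_openTriangle_of_mem_openSegment {x y z : E} (hx : x ∈ openTriangle b)
    (hy : ∀ i, 0 ≤ b.coord i y) (hz : z ∈ openSegment ℝ x y) : z ∈ openTriangle b := by
  obtain ⟨s, t, hs, ht, hst, rfl⟩ := hz
  intro i
  rw [Convex.combo_affine_apply hst]
  have := hx i
  have := hy i
  simp only [smul_eq_mul]
  positivity

lemma convex_openTriangle : Convex ℝ (openTriangle b) :=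
  convex_iff_openSegment_subset.2 fun _ hx _ hy _ =>
    mem_openTriangle_of_mem_openSegment b hx fun i => (hy i).le

lemma convex_insert_openTriangle (k : Fin 3) : Convex ℝ (insert (b k) (openTriangle b)) := by
  have hk (i : Fin 3) : 0 ≤ b.coord i (b k) := by rw [b.coord_apply]; split_ifs <;> simp
  refine convex_iff_openSegment_subset.2 ?_
  rintro x (rfl | hx) y (rfl | hy) z hz
  · exact Or.inl (by simpa using hz)
  · rw [openSegment_symm] at hz
    exact Or.inr (mem_openTriangle_of_mem_openSegment b hy hk hz)
  · exact Or.inr (mem_openTriangle_of_mem_openSegment b hx hk hz)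
  · exact Or.inr (mem_openTriangle_of_mem_openSegment b hx (fun i => (hy i).le) hz)

end

/-! ### Straight-line plane drawings -/

section
variable {E : Type*} [AddCommGroup E] [Module ℝ E]

lemma exists_affineBasis_eq [Fact (Module.finrank ℝ E = 2)] {f : Fin 3 → E}
    (hf : AffineIndependent ℝ f) : ∃ b : AffineBasis (Fin 3) ℝ E, ⇑b = f := by
  have hE : Module.finrank ℝ E = 2 := Fact.out
  have : FiniteDimensional ℝ E := Module.finite_of_finrank_eq_succ hE
  exact ⟨⟨f, hf, hf.affineSpan_eq_top_iff_card_eq_finrank_add_one.2 (by simp [hE])⟩, rfl⟩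

lemma endpoints_eq_of_mem_openSegment {u v x y z : E} (hxl : x ∈ line[ℝ, u, v])
    (hyl : y ∈ line[ℝ, u, v]) (hz : z ∈ openSegment ℝ u v) (hz' : z ∈ openSegment ℝ x y)
    (hu : u ∉ openSegment ℝ x y) (hv : v ∉ openSegment ℝ x y)
    (hx : x ∉ openSegment ℝ u v) (hy : y ∉ openSegment ℝ u v) : s(u, v) = s(x, y) := by
  have huv : u ≠ v := by
    rintro rfl
    obtain rfl : z = u := by simpa using hz
    exact hu hz'
  obtain ⟨a, rfl⟩ := mem_affineSpan_pair_iff_exists_lineMap_eq.1 hxl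
  obtain ⟨b, rfl⟩ := mem_affineSpan_pair_iff_exists_lineMap_eq.1 hyl
  obtain ⟨c, hc, rfl⟩ := (openSegment_eq_image_lineMap ℝ u v).subset hz
  have hopen {r s w : ℝ} : AffineMap.lineMap u v w ∈
      openSegment ℝ (AffineMap.lineMap u v r) (AffineMap.lineMap u v s) ↔
        w ∈ openSegment ℝ r s := by
    rw [← image_openSegment, (AffineMap.lineMap_injective ℝ huv).mem_set_image]
  have hu' : 0 ∉ openSegment ℝ a b := fun h => hu (by simpa using hopen.2 h)
  have hv' : 1 ∉ openSegment ℝ a b := fun h => hv (by simpa using hopen.2 h)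
  have hx' : a ∉ openSegment ℝ 0 1 := fun h => hx (by simpa using hopen.2 h)
  have hy' : b ∉ openSegment ℝ 0 1 := fun h => hy (by simpa using hopen.2 h)
  have hz' := hopen.1 hz'
  rw [openSegment_eq_Ioo one_pos] at hx' hy'
  suffices a = 0 ∧ b = 1 ∨ a = 1 ∧ b = 0 by
    rcases this with ⟨rfl, rfl⟩ | ⟨rfl, rfl⟩ <;> simp [Sym2.eq_swap]
  rcases lt_trichotomy a b with hab | rfl | hab
  · rw [openSegment_eq_Ioo hab] at *
    grind
  · simp_all
  · rw [openSegment_symm, openSegment_eq_Ioo hab] at *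
    grind
end

/-- A straight-line drawing of `G` in `E` without crossings: distinct vertices are distinct points,
and the relative interior of an edge meets no vertex and no other edge. Since `openSegment ℝ x x` is
`{x}`, everything is stated for the interiors, so that shared endpoints need no exception. -/
structure IsPlaneDrawing {V E : Type*} [AddCommGroup E] [Module ℝ E] (G : SimpleGraph V)
    (p : V → E) : Prop where
  injective : Function.Injective p
  notMem : ∀ {u v : V}, G.Adj u v → ∀ w, p w ∉ openSegment ℝ (p u) (p v)
  edge_eq : ∀ {u v x y : V}, G.Adj u v → G.Adj x y → ∀ z, z ∈ openSegment ℝ (p u) (p v) →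
    z ∈ openSegment ℝ (p x) (p y) → s(u, v) = s(x, y)

namespace IsPlaneDrawing

variable {V E : Type*} [AddCommGroup E] [Module ℝ E] {G : SimpleGraph V} {p q : V → E}

lemma mem_segment (h : IsPlaneDrawing G p) {u v w : V} (huv : G.Adj u v)
    (hw : p w ∈ segment ℝ (p u) (p v)) : w = u ∨ w = v := by
  rw [← insert_endpoints_openSegment] at hw
  rcases hw with hw | hw | hw
  · exact Or.inl (h.injective hw)
  · exact Or.inr (h.injective hw)
  · exact absurd hw (h.notMem huv w)

lemma of_mapsTo (h : IsPlaneDrawing G p) (ψ : E → E) (hψ : ∀ v, ψ (q v) = p v)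
    (hmaps : ∀ {x y}, G.Adj x y →
      MapsTo ψ (openSegment ℝ (q x) (q y)) (openSegment ℝ (p x) (p y))) :
    IsPlaneDrawing G q where
  injective x y hxy := h.injective (by rw [← hψ, ← hψ, hxy])
  notMem huv w hw := h.notMem huv w (hψ w ▸ hmaps huv hw)
  edge_eq huv hxy z hz hz' := h.edge_eq huv hxy (ψ z) (hmaps huv hz) (hmaps hxy hz')

lemma sup_edge (h : IsPlaneDrawing G p) {u v : V}
    (hvert : ∀ w, p w ∉ openSegment ℝ (p u) (p v))
    (hedge : ∀ x y, G.Adj x y → ∀ z ∈ openSegment ℝ (p u) (p v), z ∉ openSegment ℝ (p x) (p y)) :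
    IsPlaneDrawing (G ⊔ SimpleGraph.edge u v) p := by
  have hadj {x y} (hxy : (G ⊔ SimpleGraph.edge u v).Adj x y) :
      G.Adj x y ∨ s(x, y) = s(u, v) ∧
        openSegment ℝ (p x) (p y) = openSegment ℝ (p u) (p v) := by
    rw [SimpleGraph.sup_adj, SimpleGraph.edge_adj] at hxy
    rcases hxy with hxy | ⟨⟨rfl, rfl⟩ | ⟨rfl, rfl⟩, -⟩
    · exact Or.inl hxy
    · exact Or.inr ⟨rfl, rfl⟩
    · exact Or.inr ⟨Sym2.eq_swap, openSegment_symm _ _ _⟩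
  refine ⟨h.injective, fun {x y} hxy w => ?_, fun {x y x' y'} hxy hxy' z hz hz' => ?_⟩
  · rcases hadj hxy with hxy | ⟨-, he⟩
    · exact h.notMem hxy w
    · exact he ▸ hvert w
  · rcases hadj hxy with hxy | ⟨hs, he⟩ <;> rcases hadj hxy' with hxy' | ⟨hs', he'⟩
    · exact h.edge_eq hxy hxy' z hz hz'
    · exact absurd hz (hedge x y hxy z (he' ▸ hz'))
    · exact absurd hz' (hedge x' y' hxy' z (he ▸ hz))
    · rw [hs, hs']

lemma not_collinear (h : IsPlaneDrawing G p) {x y z : V} (hxy : G.Adj x y) (hyz : G.Adj y z)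
    (hxz : G.Adj x z) : ¬ Collinear ℝ {p x, p y, p z} := by
  intro hcol
  rcases hcol.wbtw_or_wbtw_or_wbtw with hw | hw | hw <;> rw [← mem_segment_iff_wbtw] at hw
  · rcases h.mem_segment hxz hw with rfl | rfl <;> simp at *
  · rcases h.mem_segment hxy.symm hw with rfl | rfl <;> simp at *
  · rcases h.mem_segment hyz.symm hw with rfl | rfl <;> simp at *

lemma exists_affineBasis [Fact (Module.finrank ℝ E = 2)] (h : IsPlaneDrawing G p) {t : Fin 3 → V}
    (ht : Pairwise fun i j => G.Adj (t i) (t j)) :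
    ∃ b : AffineBasis (Fin 3) ℝ E, ∀ i, b i = p (t i) := by
  obtain ⟨b, hb⟩ := exists_affineBasis_eq (E := E)
    (affineIndependent_iff_not_collinear_set.2
      (h.not_collinear (ht (by decide : (0 : Fin 3) ≠ 1)) (ht (by decide : (1 : Fin 3) ≠ 2))
        (ht (by decide : (0 : Fin 3) ≠ 2))))
  refine ⟨b, fun i => ?_⟩
  rw [hb]
  fin_cases i <;> rfl

end IsPlaneDrawing

lemma isPlanarEmbedding_iff_isPlaneDrawing {n : ℕ} {G : SimpleGraph (Fin n)}
    {p : Fin n → EuclideanSpace ℝ (Fin 2)} : IsPlanarEmbedding G p ↔ IsPlaneDrawing G p := by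
  constructor
  · rintro ⟨hinj, hvert, hedge⟩
    have hnot {u v : Fin n} (huv : G.Adj u v) (w : Fin n) : p w ∉ openSegment ℝ (p u) (p v) := by
      intro hw
      rcases hvert u v w huv (openSegment_subset_segment _ _ _ hw) with rfl | rfl
      · exact huv.ne (hinj (left_mem_openSegment_iff.1 hw))
      · exact huv.ne (hinj (right_mem_openSegment_iff.1 hw))
    refine ⟨hinj, hnot, fun {u v x y} huv hxy z hz hz' => by_contra fun hne => ?_⟩
    obtain ⟨w, -, rfl⟩ := hedge u v x y huv hxy
      (fun h => hne (Sym2.eq_iff.2 (pair_eq_pair_iff.1 h)))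
      ⟨openSegment_subset_segment _ _ _ hz, openSegment_subset_segment _ _ _ hz'⟩
    exact hnot huv w hz
  · intro h
    refine ⟨h.injective, fun _ _ _ => h.mem_segment, ?_⟩
    rintro u v x y huv hxy hne z ⟨hz, hz'⟩
    have hzs := hz
    have hzs' := hz'
    rw [← insert_endpoints_openSegment] at hz hz'
    rcases hz with rfl | rfl | hz
    · exact ⟨u, ⟨by simp, h.mem_segment hxy hzs'⟩, rfl⟩
    · exact ⟨v, ⟨by simp, h.mem_segment hxy hzs'⟩, rfl⟩
    rcases hz' with rfl | rfl | hz'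
    · exact absurd hz (h.notMem huv x)
    · exact absurd hz (h.notMem huv y)
    · exact absurd (pair_eq_pair_iff.2 (Sym2.eq_iff.1 (h.edge_eq huv hxy z hz hz'))) hne

/-! ### Visibility -/

section
variable {E : Type*} [AddCommGroup E] [Module ℝ E]

/-- The interiors of the segments `[o, q]` and `[x, y]` meet and the segments are not collinear. -/
def SegmentsCross (o q x y : E) : Prop :=
  ¬ Collinear ℝ {o, q, x} ∧ (openSegment ℝ o q ∩ openSegment ℝ x y).Nonempty

lemma SegmentsCross.symm_left {o q x y : E} (h : SegmentsCross o q x y) :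
    SegmentsCross q o x y := by
  rwa [SegmentsCross, insert_comm, openSegment_symm]

lemma SegmentsCross.symm_right {o q x y : E} (h : SegmentsCross o q x y) :
    SegmentsCross o q y x := by
  obtain ⟨hcol, z, hz, hzx⟩ := h
  refine ⟨fun hy => hcol ?_, z, hz, openSegment_symm ℝ x y ▸ hzx⟩
  rcases eq_or_ne o q with rfl | hoq
  · simp [collinear_pair]
  have hyl : y ∈ line[ℝ, o, q] :=
    hy.mem_affineSpan_of_mem_of_ne (by simp) (by simp) (by simp) hoq
  have hzl : z ∈ line[ℝ, o, q] :=
    segment_subset_affineSpan_pair o q (openSegment_subset_segment ℝ o q hz)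
  exact collinear_triple_of_mem_affineSpan_pair (left_mem_affineSpan_pair ℝ o q)
    (right_mem_affineSpan_pair ℝ o q) (affineSpan_pair_le_of_mem_of_mem hzl hyl
      (left_mem_affineSpan_pair_of_mem_openSegment hzx))

lemma SegmentsCross.mono {o q o' q' x y : E} (h : SegmentsCross o' q' x y)
    (ho : o' ∈ segment ℝ o q) (hq : q' ∈ segment ℝ o q) : SegmentsCross o q x y := by
  obtain ⟨hcol, z, hz, hzx⟩ := h
  have hne : o' ≠ q' := by
    rintro rfl
    exact hcol (by simp [collinear_pair])
  refine ⟨fun hx => hcol ?_, z, openSegment_subset_openSegment ho hq hne hz, hzx⟩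
  have hoq : o ≠ q := by
    rintro rfl
    simp_all
  exact collinear_triple_of_mem_affineSpan_pair (segment_subset_affineSpan_pair o q ho)
    (segment_subset_affineSpan_pair o q hq)
    (hx.mem_affineSpan_of_mem_of_ne (by simp) (by simp) (by simp) hoq)

lemma not_segmentsCross_of_mem_openSegment {o q x y z : E} (hcol : ¬ Collinear ℝ {o, q, x})
    (hz : z ∈ openSegment ℝ o q) (hzx : z ∈ openSegment ℝ x y) : ¬ SegmentsCross o z x y := by
  rintro ⟨hcol', z', hz', hzx'⟩
  have hoz : o ≠ z := by
    rintro rfl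
    exact hcol' (by simp [collinear_pair])
  have hsub := openSegment_subset_openSegment (left_mem_segment ℝ o q)
    (openSegment_subset_segment ℝ o q hz) hoz
  have hline {w u v : E} (h : w ∈ openSegment ℝ u v) : w ∈ line[ℝ, u, v] :=
    segment_subset_affineSpan_pair u v (openSegment_subset_segment ℝ u v h)
  obtain rfl := eq_of_mem_affineSpan_pair_of_not_collinear hcol (hline hz) (hline (hsub hz'))
    (hline hzx) (hline hzx')
  exact hoz (right_mem_openSegment_iff.1 hz')

variable {V : Type*} {G : SimpleGraph V} {p : V → E}

/-- No edge of the drawing crosses the segment `[o, q]`. -/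
def Uncrossed (G : SimpleGraph V) (p : V → E) (o q : E) : Prop :=
  ∀ x y, G.Adj x y → ¬ SegmentsCross o q (p x) (p y)

lemma Uncrossed.symm {o q : E} (h : Uncrossed G p o q) : Uncrossed G p q o :=
  fun x y hxy hc => h x y hxy hc.symm_left

lemma Uncrossed.mono {o q o' q' : E} (h : Uncrossed G p o q) (ho : o' ∈ segment ℝ o q)
    (hq : q' ∈ segment ℝ o q) : Uncrossed G p o' q' :=
  fun x y hxy hc => h x y hxy (hc.mono ho hq)

/-- The side `[b 1, b 2]` of the triangle lies on the edge `r r'` of the drawing, no edge crosses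
the side `[b 0, b 1]`, and all vertices in the triangle lie on the side `[b 0, b 2]`. Such a
triangle is swept by the ray from `b 0` to the edge `r r'` while it turns away from `b 1`, until it
first meets a vertex. -/
structure IsSweptTriangle (G : SimpleGraph V) (p : V → E) (b : AffineBasis (Fin 3) ℝ E)
    (r r' : V) : Prop where
  adj : G.Adj r r'
  mem_openSegment : b 1 ∈ openSegment ℝ (p r) (p r')
  mem_segment : b 2 ∈ segment ℝ (p r) (p r')
  coord_left : b.coord 0 (p r) = 0
  uncrossed : Uncrossed G p (b 0) (b 1)
  coord_nonpos : ∀ w, (∀ i, 0 ≤ b.coord i (p w)) → b.coord 1 (p w) ≤ 0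

namespace IsSweptTriangle

variable {b : AffineBasis (Fin 3) ℝ E} {r r' x y : V} {m v : E}

lemma coord_right (hb : IsSweptTriangle G p b r r') : b.coord 0 (p r') = 0 := by
  obtain ⟨s, t, -, ht, hst, hb₁⟩ := hb.mem_openSegment
  simpa [Convex.combo_affine_apply hst, hb.coord_left, ht.ne'] using congr_arg (b.coord 0) hb₁

lemma coord_pos_of_ne (hb : IsSweptTriangle G p b r r') (h : IsPlaneDrawing G p)
    (hxy : G.Adj x y) (hne : s(x, y) ≠ s(r, r')) (hm : m ∈ openSegment ℝ (p x) (p y))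
    (hmT : ∀ i, 0 ≤ b.coord i m) : 0 < b.coord 0 m := by
  refine (hmT 0).lt_of_ne' fun hm₀ => ?_
  have hmr : m ∈ segment ℝ (p r) (p r') :=
    (convex_segment _ _).segment_subset (openSegment_subset_segment _ _ _ hb.mem_openSegment)
      hb.mem_segment (mem_segment_of_coord_eq_zero b hm₀ (hmT 1) (hmT 2))
  rw [← insert_endpoints_openSegment] at hmr
  rcases hmr with rfl | rfl | hmr
  · exact h.notMem hxy r hm
  · exact h.notMem hxy r' hm
  · exact hne (h.edge_eq hxy hb.adj m hm hmr)

lemma eq_of_mem (hb : IsSweptTriangle G p b r r') (h : IsPlaneDrawing G p) (hxy : G.Adj x y)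
    (hm : m ∈ openSegment ℝ (p x) (p y)) (hmT : ∀ i, 0 ≤ b.coord i m) (hm₂ : 0 < b.coord 2 m)
    (hx : 0 < b.coord 1 (p x)) : s(x, y) = s(r, r') := by
  by_contra hne
  have hxneg : ∃ i, ![b.coord 0, b.coord 2] i (p x) < 0 := by
    by_contra! hpos
    exact (hb.coord_nonpos x (by simpa [Fin.forall_fin_succ, hx.le] using hpos)).not_gt hx
  obtain ⟨z, hz, hzpos, i, hineg, hi⟩ := exists_first_zero ![b.coord 0, b.coord 2] (x := m)
    (by simpa [Fin.forall_fin_succ, hm₂] using hb.coord_pos_of_ne h hxy hne hm hmT) hxneg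
  have hz₁ : 0 < b.coord 1 z := by
    obtain ⟨s, t, hs, ht, hst, rfl⟩ := hz
    have := hmT 1
    rw [Convex.combo_affine_apply hst, smul_eq_mul, smul_eq_mul]
    positivity
  have hzxy : z ∈ openSegment ℝ (p x) (p y) := by
    refine openSegment_subset_openSegment (openSegment_subset_segment ℝ _ _ hm)
      (left_mem_segment ℝ _ _) ?_ hz
    rintro rfl
    exact h.notMem hxy x hm
  have hzT : ∀ i, 0 ≤ b.coord i z := by simpa [Fin.forall_fin_succ, hz₁.le] using hzpos
  have hz₀ := hb.coord_pos_of_ne h hxy hne hzxy hzT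
  fin_cases i
  · exact hz₀.ne' hi
  · exact hb.uncrossed x y hxy ⟨not_collinear_of_affineMap (b.coord 2)
      (b.ind.injective.ne (by decide)) (by simp) (by simp) hineg.ne,
      z, mem_openSegment_of_coord_eq_zero b (l := 2) hi hz₀ hz₁, hzxy⟩

lemma coord_eq_zero (hb : IsSweptTriangle G p b r r') (h : IsPlaneDrawing G p) (hxy : G.Adj x y)
    (hm : m ∈ openSegment ℝ (p x) (p y)) (hmT : ∀ i, 0 ≤ b.coord i m) (hm₂ : 0 < b.coord 2 m)
    (hne : b.coord 1 (p x) ≠ 0 ∨ b.coord 1 m ≠ 0) :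
    b.coord 0 (p x) = 0 ∧ b.coord 0 m = 0 := by
  have he : s(x, y) = s(r, r') := by
    rcases pos_or_pos_of_mem_openSegment (b.coord 1) hm (hmT 1) hne with hx | hy
    · exact hb.eq_of_mem h hxy hm hmT hm₂ hx
    · rw [Sym2.eq_swap]
      exact hb.eq_of_mem h hxy.symm (openSegment_symm ℝ (p x) (p y) ▸ hm) hmT hm₂ hy
  obtain ⟨s, t, -, -, hst, rfl⟩ := hm
  rw [Convex.combo_affine_apply hst]
  rcases Sym2.eq_iff.1 he with ⟨rfl, rfl⟩ | ⟨rfl, rfl⟩ <;> simp [hb.coord_left, hb.coord_right]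

lemma uncrossed_left (hb : IsSweptTriangle G p b r r') (h : IsPlaneDrawing G p)
    (hv₀ : 0 ≤ b.coord 0 v) (hv₁ : b.coord 1 v = 0) (hv₂ : 0 < b.coord 2 v) :
    Uncrossed G p (b 0) v := by
  rintro x y hxy ⟨hcol, m, ⟨s, t, hs, ht, hst, rfl⟩, hm⟩
  have hval (i : Fin 3) := Convex.combo_affine_apply hst (f := b.coord i) (x := b 0) (y := v)
  have hm₀ : 0 < b.coord 0 (s • b 0 + t • v) := by
    simpa [hval] using (by positivity : 0 < s + t * b.coord 0 v)
  have hm₂ : 0 < b.coord 2 (s • b 0 + t • v) := by simpa [hval] using mul_pos ht hv₂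
  refine hm₀.ne' (hb.coord_eq_zero h hxy hm ?_ hm₂ (Or.inl fun hx => hcol ?_)).2
  · have hm₁ : b.coord 1 (s • b 0 + t • v) = 0 := by simp [hval, hv₁]
    exact (forall_fin_three_cyclic 0).2 ⟨hm₀.le, hm₁.ge, hm₂.le⟩
  · exact collinear_of_coord_eq_zero b (l := 1) (by simp) hv₁ hx

lemma uncrossed_right (hb : IsSweptTriangle G p b r r') (h : IsPlaneDrawing G p)
    (hv₀ : 0 ≤ b.coord 0 v) (hv₁ : b.coord 1 v = 0) (hv₂ : 0 < b.coord 2 v) :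
    Uncrossed G p v (b 1) := by
  rintro x y hxy ⟨hcol, m, ⟨s, t, hs, ht, hst, rfl⟩, hm⟩
  have hval (i : Fin 3) := Convex.combo_affine_apply hst (f := b.coord i) (x := v) (y := b 1)
  have hm₀ : 0 ≤ b.coord 0 (s • v + t • b 1) := by simpa [hval] using mul_nonneg hs.le hv₀
  have hm₁ : 0 < b.coord 1 (s • v + t • b 1) := by simp [hval, hv₁, ht]
  have hm₂ : 0 < b.coord 2 (s • v + t • b 1) := by simpa [hval] using mul_pos hs hv₂
  obtain ⟨hx₀, hm₀⟩ := hb.coord_eq_zero h hxy hm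
    ((forall_fin_three_cyclic 0).2 ⟨hm₀, hm₁.le, hm₂.le⟩) hm₂ (Or.inr hm₁.ne')
  have hv : b.coord 0 v = 0 := by simpa [hval, hs.ne'] using hm₀
  exact hcol (collinear_of_coord_eq_zero b (l := 0) hv (by simp) hx₀)

end IsSweptTriangle

lemma exists_affineBasis_lineMap [Fact (Module.finrank ℝ E = 2)] (b : AffineBasis (Fin 3) ℝ E)
    {θ : ℝ} (hθ : θ ≠ 0) :
    ∃ b' : AffineBasis (Fin 3) ℝ E, b' 0 = b 0 ∧ b' 1 = b 1 ∧
      b' 2 = AffineMap.lineMap (b 1) (b 2) θ ∧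
      ∀ x, b.coord 0 x = b'.coord 0 x ∧ b.coord 2 x = b'.coord 2 x * θ := by
  have hz (i : Fin 3) : b.coord i (AffineMap.lineMap (b 1) (b 2) θ) = ![0, 1 - θ, θ] i := by
    rw [AffineMap.apply_lineMap, AffineMap.lineMap_apply_ring']
    fin_cases i <;> simp [sub_eq_neg_add]
  obtain ⟨b', hb'⟩ := exists_affineBasis_eq (affineIndependent_iff_not_collinear_set.2
    (not_collinear_of_affineMap (b.coord 2) (b.ind.injective.ne (by decide : (0 : Fin 3) ≠ 1))
      (by simp) (by simp) ((hz 2).trans_ne hθ)))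
  refine ⟨b', by simp [hb'], by simp [hb'], by simp [hb'], fun x => ⟨?_, ?_⟩⟩ <;>
    simp [apply_eq_sum_coord b' (b.coord _) x, Fin.sum_univ_three, hb', hz]

lemma isSweptTriangle_of_forall_le {b b' : AffineBasis (Fin 3) ℝ E} {r r' : V} (hr : G.Adj r r')
    (hbr : b 2 = p r) (hq : b 1 ∈ openSegment ℝ (p r) (p r')) (hun : Uncrossed G p (b 0) (b 1))
    {θ : ℝ} (hθ₀ : 0 < θ) (hθ₁ : θ ≤ 1)
    (hθ : ∀ w, (∀ i, 0 ≤ b.coord i (p w)) → θ * (1 - b.coord 0 (p w)) ≤ b.coord 2 (p w))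
    (h₀ : b' 0 = b 0) (h₁ : b' 1 = b 1) (h₂ : b' 2 = AffineMap.lineMap (b 1) (b 2) θ)
    (hcoord : ∀ x, b.coord 0 x = b'.coord 0 x ∧ b.coord 2 x = b'.coord 2 x * θ) :
    IsSweptTriangle G p b' r r' where
  adj := hr
  mem_openSegment := h₁ ▸ hq
  mem_segment := by
    have hb₂ : b 2 ∈ segment ℝ (p r) (p r') := hbr ▸ left_mem_segment ℝ _ _
    refine (convex_segment _ _).segment_subset (openSegment_subset_segment _ _ _ hq) hb₂ ?_
    rw [h₂, segment_eq_image_lineMap]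
    exact mem_image_of_mem _ ⟨hθ₀.le, hθ₁⟩
  coord_left := by simp [← (hcoord _).1, ← hbr]
  uncrossed := by rwa [h₀, h₁]
  coord_nonpos w hw := by
    have hsum := coord_add_coord_add_coord b 0 (p w)
    have hsum' := coord_add_coord_add_coord b' 0 (p w)
    simp only [zero_add, hcoord] at hsum hsum'
    have hw₁ : 0 ≤ b.coord 1 (p w) := by
      nlinarith [hw 1, mul_nonneg (hw 2) (sub_nonneg.2 hθ₁)]
    have hle := hθ w ((forall_fin_three_cyclic 0).2 ⟨(hcoord _).1 ▸ hw 0, hw₁,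
      (hcoord _).2 ▸ mul_nonneg (hw 2) hθ₀.le⟩)
    rw [(hcoord _).1, (hcoord _).2, mul_comm, mul_le_mul_iff_left₀ hθ₀] at hle
    linarith

lemma exists_isSweptTriangle [Finite V] [Fact (Module.finrank ℝ E = 2)]
    (b : AffineBasis (Fin 3) ℝ E) {r r' : V} (hr : G.Adj r r') (hbr : b 2 = p r)
    (hq : b 1 ∈ openSegment ℝ (p r) (p r')) (hun : Uncrossed G p (b 0) (b 1)) :
    ∃ u, (∀ i, 0 ≤ b.coord i (p u)) ∧ b.coord 0 (p u) < 1 ∧ (b.coord 2 (p u) = 0 ∨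
      ∃ b' : AffineBasis (Fin 3) ℝ E, b' 0 = b 0 ∧ b' 1 = b 1 ∧ IsSweptTriangle G p b' r r' ∧
        0 ≤ b'.coord 0 (p u) ∧ b'.coord 1 (p u) = 0 ∧ 0 < b'.coord 2 (p u)) := by
  obtain ⟨u, ⟨huT, hu⟩, hmin⟩ := exists_min_image
    {w | (∀ i, 0 ≤ b.coord i (p w)) ∧ b.coord 0 (p w) < 1}
    (fun w => b.coord 2 (p w) / (1 - b.coord 0 (p w))) (toFinite _)
    ⟨r, by simp [← hbr, Fin.forall_fin_succ]⟩
  refine ⟨u, huT, hu, (huT 2).eq_or_lt.imp Eq.symm fun hu₂ => ?_⟩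
  have hu' : 0 < 1 - b.coord 0 (p u) := sub_pos.2 hu
  have hsum := coord_add_coord_add_coord b 0 (p u)
  rw [zero_add, zero_add] at hsum
  set θ := b.coord 2 (p u) / (1 - b.coord 0 (p u)) with hθ
  have hθ₀ : 0 < θ := by positivity
  have hθ₁ : θ ≤ 1 := by
    rw [hθ, div_le_one hu']
    linarith [huT 1]
  have hle (w : V) (hw : ∀ i, 0 ≤ b.coord i (p w)) :
      θ * (1 - b.coord 0 (p w)) ≤ b.coord 2 (p w) := by
    rcases lt_or_ge (b.coord 0 (p w)) 1 with hlt | hge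
    · exact (le_div_iff₀ (by linarith)).1 (hmin w ⟨hw, hlt⟩)
    · exact (mul_nonpos_of_nonneg_of_nonpos hθ₀.le (by linarith)).trans (hw 2)
  obtain ⟨b', h₀, h₁, h₂, hcoord⟩ := exists_affineBasis_lineMap b hθ₀.ne'
  have hu₂' : b'.coord 2 (p u) = 1 - b.coord 0 (p u) := by
    rw [← mul_left_inj' hθ₀.ne', ← (hcoord (p u)).2, hθ]
    field_simp
  have hsum' := coord_add_coord_add_coord b' 0 (p u)
  rw [zero_add, zero_add, hu₂', ← (hcoord (p u)).1] at hsum'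
  exact ⟨b', h₀, h₁, isSweptTriangle_of_forall_le hr hbr hq hun hθ₀ hθ₁ hle h₀ h₁ h₂ hcoord,
    (hcoord _).1 ▸ huT 0, by linarith, hu₂' ▸ hu'⟩

namespace IsPlaneDrawing

lemma exists_visible [Finite V] [Fact (Module.finrank ℝ E = 2)] (h : IsPlaneDrawing G p) {o q : E}
    {r r' : V} (hr : G.Adj r r') (hq : q ∈ openSegment ℝ (p r) (p r'))
    (hcol : ¬ Collinear ℝ {o, q, p r}) (hun : Uncrossed G p o q) :
    ∃ u, p u ∈ convexHull ℝ {o, q, p r} ∧ o ∉ convexHull ℝ {p u, q, p r} ∧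
      Uncrossed G p o (p u) ∧ Uncrossed G p (p u) q := by
  obtain ⟨b, hb⟩ := exists_affineBasis_eq (affineIndependent_iff_not_collinear_set.2 hcol)
  have hb₀ : b 0 = o := by simp [hb]
  have hb₁ : b 1 = q := by simp [hb]
  have hb₂ : b 2 = p r := by simp [hb]
  have hrange : range b = {o, q, p r} := by
    ext x
    simp [hb, eq_comm, or_left_comm, or_comm]
  rw [← hrange, b.convexHull_eq_nonneg_coord]
  obtain ⟨u, huT, hu, hu'⟩ := exists_isSweptTriangle b hr hb₂ (hb₁ ▸ hq) (by rwa [hb₀, hb₁])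
  refine ⟨u, huT, ?_, ?_⟩
  · have hhull : convexHull ℝ {p u, q, p r} ⊆ b.coord 0 ⁻¹' Iio 1 :=
      convexHull_min (by simp [insert_subset_iff, hu, ← hb₁, ← hb₂])
        ((convex_Iio 1).affine_preimage _)
    intro ho
    simpa [← hb₀] using hhull ho
  rcases hu' with hu₂ | ⟨b', h₀, h₁, hs, hu₀, hu₁, hu₂⟩
  · have hseg := mem_segment_of_coord_eq_zero b (l := 2) hu₂ (huT 0) (huT 1)
    have hseg : p u ∈ segment ℝ o q := by rwa [← hb₀, ← hb₁]
    exact ⟨hun.mono (left_mem_segment ℝ o q) hseg, hun.mono hseg (right_mem_segment ℝ o q)⟩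
  · rw [← hb₀, ← hb₁, ← h₀, ← h₁]
    exact ⟨hs.uncrossed_left h hu₀ hu₁ hu₂, hs.uncrossed_right h hu₀ hu₁ hu₂⟩

end IsPlaneDrawing
end

/-! ### Saturated drawings and convex regions -/

lemma mem_segment_of_collinear_of_notMem_openSegment {E : Type*} [AddCommGroup E] [Module ℝ E]
    {o q x y : E} (hq : q ∈ openSegment ℝ x y) (ho : o ∉ openSegment ℝ x y)
    (hcol : Collinear ℝ {o, q, x}) : x ∈ segment ℝ o q ∨ y ∈ segment ℝ o q := by
  rcases eq_or_ne q x with rfl | hqx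
  · exact Or.inl (right_mem_segment ℝ o q)
  have hol : o ∈ line[ℝ, x, y] :=
    affineSpan_pair_le_of_mem_of_mem
      (segment_subset_affineSpan_pair x y (openSegment_subset_segment ℝ x y hq))
      (left_mem_affineSpan_pair ℝ x y)
      (hcol.mem_affineSpan_of_mem_of_ne (by simp) (by simp) (by simp) hqx)
  obtain ⟨a, rfl⟩ := mem_affineSpan_pair_iff_exists_lineMap_eq.1 hol
  obtain ⟨c, ⟨hc₀, hc₁⟩, rfl⟩ := (openSegment_eq_image_lineMap ℝ x y).subset hq
  have ha : a ∉ Ioo 0 1 := fun h => ho (openSegment_eq_image_lineMap ℝ x y ▸ mem_image_of_mem _ h)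
  have hmem {t : ℝ} (ht : t ∈ uIcc a c) : AffineMap.lineMap x y t ∈
      segment ℝ (AffineMap.lineMap x y a) (AffineMap.lineMap x y c : E) := by
    rw [← image_segment, segment_eq_uIcc]
    exact mem_image_of_mem _ ht
  rcases le_or_gt a 0 with ha₀ | ha₀
  · exact Or.inl (by simpa using hmem (Icc_subset_uIcc ⟨ha₀, hc₀.le⟩))
  · have ha₁ : 1 ≤ a := not_lt.1 fun h => ha ⟨ha₀, h⟩
    exact Or.inr (by simpa using hmem (Icc_subset_uIcc' ⟨hc₁.le, ha₁⟩))

section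
variable {V E : Type*} [AddCommGroup E] [Module ℝ E]

/-- A plane drawing of `G` to which no edge can be added without moving vertices. -/
structure IsSaturatedDrawing (G : SimpleGraph V) (p : V → E) : Prop extends
    IsPlaneDrawing G p where
  not_isPlaneDrawing_sup : ∀ {u v}, u ≠ v → ¬ G.Adj u v →
    ¬ IsPlaneDrawing (G ⊔ SimpleGraph.edge u v) p

/-- The point `q` of the drawing is the vertex `r` or lies inside an edge at `r`. -/
def IsAttached (G : SimpleGraph V) (p : V → E) (q : E) (r : V) : Prop :=
  q = p r ∨ ∃ s, G.Adj r s ∧ q ∈ openSegment ℝ (p r) (p s)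

/-- Every edge of the drawing that meets `C` has an end in `C`. -/
def EdgesEndIn (G : SimpleGraph V) (p : V → E) (C : Set E) : Prop :=
  ∀ ⦃x y⦄, G.Adj x y → ∀ z ∈ openSegment ℝ (p x) (p y), z ∈ C → p x ∈ C ∨ p y ∈ C

variable {G : SimpleGraph V} {p : V → E} {C : Set E} {α : Type*} {c : V → α} {o q : E}
  {r s u v : V}

namespace IsSaturatedDrawing

lemma adj_of_uncrossed (h : IsSaturatedDrawing G p) (huv : u ≠ v)
    (hun : Uncrossed G p (p u) (p v)) (hempty : ∀ w, p w ∉ openSegment ℝ (p u) (p v)) :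
    G.Adj u v := by
  by_contra hadj
  refine h.not_isPlaneDrawing_sup huv hadj (h.sup_edge hempty fun x y hxy z hz hzx => hadj ?_)
  have hline {w : V} (hw : Collinear ℝ {p u, p v, p w}) : p w ∈ line[ℝ, p u, p v] :=
    hw.mem_affineSpan_of_mem_of_ne (by simp) (by simp) (by simp) (h.injective.ne huv)
  have hx : p x ∈ line[ℝ, p u, p v] := hline (by_contra fun hx => hun x y hxy ⟨hx, z, hz, hzx⟩)
  have hy : p y ∈ line[ℝ, p u, p v] := hline (by_contra fun hy =>
    hun y x hxy.symm ⟨hy, z, hz, openSegment_symm ℝ (p x) (p y) ▸ hzx⟩)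
  have he : s(p u, p v) = s(p x, p y) := endpoints_eq_of_mem_openSegment hx hy hz hzx
    (h.notMem hxy u) (h.notMem hxy v) (hempty x) (hempty y)
  have he : s(u, v) = s(x, y) := Sym2.map.injective h.injective (by simpa using he)
  rwa [← SimpleGraph.mem_edgeSet, he]

variable [Finite V]

lemma eq_of_uncrossed_of_vertices (h : IsSaturatedDrawing G p) (hC : Convex ℝ C)
    (hc : ∀ x y, G.Adj x y → p x ∈ C → p y ∈ C → c x = c y) (hu : p u ∈ C) (hv : p v ∈ C)
    (hun : Uncrossed G p (p u) (p v)) : c u = c v := by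
  induction hn : {w | p w ∈ openSegment ℝ (p u) (p v)}.ncard using Nat.strong_induction_on
    generalizing u v with
  | _ n ih =>
  subst hn
  rcases eq_or_ne u v with rfl | huv
  · rfl
  by_cases hempty : ∀ w, p w ∉ openSegment ℝ (p u) (p v)
  · exact hc u v (h.adj_of_uncrossed huv hun hempty) hu hv
  push Not at hempty
  obtain ⟨w, hw⟩ := hempty
  have hws := openSegment_subset_segment ℝ _ _ hw
  have hwC := hC.segment_subset hu hv hws
  have huw : p u ≠ p w := fun he =>
    huv (h.injective (left_mem_openSegment_iff.1 (he.symm ▸ hw)))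
  have hwv : p w ≠ p v := fun he =>
    huv (h.injective (right_mem_openSegment_iff.1 (he ▸ hw)))
  have hlt {x y : V} (hx : p x ∈ segment ℝ (p u) (p v)) (hy : p y ∈ segment ℝ (p u) (p v))
      (hxy : p x ≠ p y) (hwx : p w ∉ openSegment ℝ (p x) (p y)) :
      {w | p w ∈ openSegment ℝ (p x) (p y)}.ncard < {w | p w ∈ openSegment ℝ (p u) (p v)}.ncard :=
    ncard_lt_ncard (ssubset_iff_subset_ne.2
      ⟨fun _ hz => openSegment_subset_openSegment hx hy hxy hz, fun he => hwx (he.ge hw)⟩)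
  exact (ih _ (hlt (left_mem_segment ℝ _ _) hws huw fun hm => huw (right_mem_openSegment_iff.1 hm))
      hu hwC (hun.mono (left_mem_segment ℝ _ _) hws) rfl).trans
    (ih _ (hlt hws (right_mem_segment ℝ _ _) hwv fun hm => hwv (left_mem_openSegment_iff.1 hm))
      hwC hv (hun.mono hws (right_mem_segment ℝ _ _)) rfl)

variable [Fact (Module.finrank ℝ E = 2)]

lemma eq_of_uncrossed_of_vertex (h : IsSaturatedDrawing G p) (hC : Convex ℝ C)
    (hc : ∀ x y, G.Adj x y → p x ∈ C → p y ∈ C → c x = c y) (hv : p v ∈ C) (hq : q ∈ C)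
    (hr : p r ∈ C) (hqr : IsAttached G p q r) (hun : Uncrossed G p (p v) q) : c v = c r := by
  rcases hqr with rfl | ⟨r', hrr', hqr⟩
  · exact h.eq_of_uncrossed_of_vertices hC hc hv hr hun
  induction hn : {w | p w ∈ convexHull ℝ {p v, q, p r}}.ncard using Nat.strong_induction_on
    generalizing v with
  | _ n ih =>
  subst hn
  by_cases hcol : Collinear ℝ {p v, q, p r}
  · have hvis {w : V} (hw : p w ∈ segment ℝ (p v) q) : p w ∈ C ∧ c v = c w :=
      have hwC := hC.segment_subset hv hq hw
      ⟨hwC, h.eq_of_uncrossed_of_vertices hC hc hv hwC (hun.mono (left_mem_segment ℝ _ _) hw)⟩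
    rcases mem_segment_of_collinear_of_notMem_openSegment hqr (h.notMem hrr' v) hcol with hw | hw
    · exact (hvis hw).2
    · exact (hvis hw).2.trans (hc _ _ hrr'.symm (hvis hw).1 hr)
  obtain ⟨u, hu, hvu, hun₁, hun₂⟩ := h.exists_visible hrr' hqr hcol hun
  have huC : p u ∈ C := convexHull_min (by simp [insert_subset_iff, *]) hC hu
  refine (h.eq_of_uncrossed_of_vertices hC hc hv huC hun₁).trans (ih _ ?_ huC hun₂ rfl)
  have hsub : convexHull ℝ {p u, q, p r} ⊆ convexHull ℝ {p v, q, p r} := by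
    refine convexHull_min ?_ (convex_convexHull ℝ _)
    rintro x (rfl | hx)
    · exact hu
    · exact subset_convexHull ℝ _ (Or.inr hx)
  have hvv : p v ∈ convexHull ℝ {p v, q, p r} := subset_convexHull ℝ _ (mem_insert _ _)
  exact ncard_lt_ncard (ssubset_iff_subset_ne.2
    ⟨fun _ hw => hsub hw, fun he => hvu (he.superset hvv)⟩)

lemma eq_of_uncrossed (h : IsSaturatedDrawing G p) (hC : Convex ℝ C)
    (hc : ∀ x y, G.Adj x y → p x ∈ C → p y ∈ C → c x = c y) (ho : o ∈ C) (hq : q ∈ C)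
    (hs : p s ∈ C) (hr : p r ∈ C) (hos : IsAttached G p o s) (hqr : IsAttached G p q r)
    (hun : Uncrossed G p o q) : c s = c r := by
  have hvis {w : V} (hw : p w ∈ C) (hun : Uncrossed G p o (p w)) : c w = c s :=
    h.eq_of_uncrossed_of_vertex hC hc hw ho hs hos hun.symm
  rcases hqr with rfl | ⟨r', hrr', hqr⟩
  · exact (hvis hr hun).symm
  by_cases hcol : Collinear ℝ {o, q, p r}
  · by_cases hor : o ∈ openSegment ℝ (p r) (p r')
    · rcases hos with rfl | ⟨s', hss', hos⟩
      · exact absurd hor (h.notMem hrr' s)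
      rcases Sym2.eq_iff.1 (h.edge_eq hss' hrr' o hos hor) with ⟨rfl, -⟩ | ⟨rfl, -⟩
      · rfl
      · exact hc _ _ hrr'.symm hs hr
    · rcases mem_segment_of_collinear_of_notMem_openSegment hqr hor hcol with hw | hw
      · exact (hvis hr (hun.mono (left_mem_segment ℝ _ _) hw)).symm
      · have hr' := hC.segment_subset ho hq hw
        exact (hvis hr' (hun.mono (left_mem_segment ℝ _ _) hw)).symm.trans
          (hc _ _ hrr'.symm hr' hr)
  · obtain ⟨u, hu, -, hun₁, hun₂⟩ := h.exists_visible hrr' hqr hcol hun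
    have huC : p u ∈ C := convexHull_min (by simp [insert_subset_iff, *]) hC hu
    exact (hvis huC hun₁).symm.trans
      (h.eq_of_uncrossed_of_vertex hC hc huC hq hr (Or.inr ⟨r', hrr', hqr⟩) hun₂)

lemma eq_of_isAttached (h : IsSaturatedDrawing G p) (hC : Convex ℝ C) (hGC : EdgesEndIn G p C)
    (hc : ∀ x y, G.Adj x y → p x ∈ C → p y ∈ C → c x = c y) (ho : o ∈ C) (hq : q ∈ C)
    (hs : p s ∈ C) (hr : p r ∈ C) (hos : IsAttached G p o s) (hqr : IsAttached G p q r) :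
    c s = c r := by
  induction hn : {e : V × V | G.Adj e.1 e.2 ∧ SegmentsCross o q (p e.1) (p e.2)}.ncard
    using Nat.strong_induction_on generalizing o q r s with
  | _ n ih =>
  subst hn
  by_cases hun : Uncrossed G p o q
  · exact h.eq_of_uncrossed hC hc ho hq hs hr hos hqr hun
  obtain ⟨x, y, hxy, hcross, hx⟩ :
      ∃ x y, G.Adj x y ∧ SegmentsCross o q (p x) (p y) ∧ p x ∈ C := by
    simp only [Uncrossed, not_forall, not_not] at hun
    obtain ⟨x, y, hxy, hcross⟩ := hun
    obtain ⟨-, z, hz, hzx⟩ := id hcross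
    rcases hGC hxy z hzx (hC.openSegment_subset ho hq hz) with hx | hy
    · exact ⟨x, y, hxy, hcross, hx⟩
    · exact ⟨y, x, hxy.symm, hcross.symm_right, hy⟩
  obtain ⟨hcol, z, hz, hzx⟩ := id hcross
  have hzs := openSegment_subset_segment ℝ o q hz
  have hzC := hC.segment_subset ho hq hzs
  have hzat : IsAttached G p z x := Or.inr ⟨y, hxy, hzx⟩
  have hlt {o' q' : E} (ho' : o' ∈ segment ℝ o q) (hq' : q' ∈ segment ℝ o q)
      (hnot : ¬ SegmentsCross o' q' (p x) (p y)) :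
      {e : V × V | G.Adj e.1 e.2 ∧ SegmentsCross o' q' (p e.1) (p e.2)}.ncard <
        {e : V × V | G.Adj e.1 e.2 ∧ SegmentsCross o q (p e.1) (p e.2)}.ncard :=
    ncard_lt_ncard (ssubset_iff_subset_ne.2 ⟨fun _ he => ⟨he.1, he.2.mono ho' hq'⟩,
      fun he => hnot ((Set.ext_iff.1 he (x, y)).2 ⟨hxy, hcross⟩).2⟩)
  exact (ih _ (hlt (left_mem_segment ℝ o q) hzs (not_segmentsCross_of_mem_openSegment hcol hz hzx))
      ho hzC hs hx hos hzat rfl).trans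
    (ih _ (hlt hzs (right_mem_segment ℝ o q) fun hzq => not_segmentsCross_of_mem_openSegment
      hcross.symm_left.1 (openSegment_symm ℝ o q ▸ hz) hzx hzq.symm_left)
      hzC hq hx hr hzat hqr rfl)

theorem preconnected_induce_preimage (h : IsSaturatedDrawing G p) (hC : Convex ℝ C)
    (hGC : EdgesEndIn G p C) : (G.induce (p ⁻¹' C)).Preconnected := by
  rintro ⟨u, hu⟩ ⟨v, hv⟩
  have hc (x y : V) (hxy : G.Adj x y) (hx : p x ∈ C) (hy : p y ∈ C) :
      (∃ hx, (G.induce (p ⁻¹' C)).Reachable ⟨u, hu⟩ ⟨x, hx⟩) =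
        ∃ hy, (G.induce (p ⁻¹' C)).Reachable ⟨u, hu⟩ ⟨y, hy⟩ := by
    have hr : (G.induce (p ⁻¹' C)).Reachable ⟨x, hx⟩ ⟨y, hy⟩ := SimpleGraph.Adj.reachable hxy
    exact propext ⟨fun ⟨_, hux⟩ => ⟨hy, hux.trans hr⟩, fun ⟨_, huy⟩ => ⟨hx, huy.trans hr.symm⟩⟩
  have he := h.eq_of_isAttached hC hGC hc hu hv hu hv (Or.inl rfl) (Or.inl rfl)
  exact (he.mp ⟨hu, SimpleGraph.Reachable.refl _⟩).2

end IsSaturatedDrawing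
end

/-! ### Vertices inside and outside a triangle -/

section
variable {V E : Type*} [AddCommGroup E] [Module ℝ E] {G : SimpleGraph V} {p : V → E}

lemma edgesEndIn_setOf_lt_zero (f : E →ᵃ[ℝ] ℝ) : EdgesEndIn G p {x | f x < 0} := by
  rintro x y - _ ⟨s, t, hs, ht, hst, rfl⟩ hz
  by_contra! h
  simp only [mem_ofPred_eq, not_lt, Convex.combo_affine_apply hst, smul_eq_mul] at h hz
  have := mul_nonneg hs.le h.1
  have := mul_nonneg ht.le h.2
  linarith

lemma EdgesEndIn.insert (h : IsPlaneDrawing G p) {C : Set E} (hC : EdgesEndIn G p C) (v : V) :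
    EdgesEndIn G p (insert (p v) C) := by
  rintro x y hxy z hz (rfl | hzC)
  · exact absurd hz (h.notMem hxy v)
  · exact (hC hxy z hz hzC).imp Or.inr Or.inr

/-- The corners of the affine basis `b` are the points representing a triangle `t` of `G`, so that
the barycentric coordinates of `b` locate the vertices and edges of the drawing relative to `t`. -/
structure IsTriangleBasis (G : SimpleGraph V) (p : V → E) (t : Fin 3 → V)
    (b : AffineBasis (Fin 3) ℝ E) : Prop where
  adj : Pairwise fun i j => G.Adj (t i) (t j)
  apply_eq : ∀ i, b i = p (t i)

namespace IsTriangleBasis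

variable {t : Fin 3 → V} {b : AffineBasis (Fin 3) ℝ E} {x y w : V} {z : E} {l : Fin 3}

lemma coord_vertex (hb : IsTriangleBasis G p t b) (i j : Fin 3) :
    b.coord i (p (t j)) = if i = j then 1 else 0 := by
  rw [← hb.apply_eq, b.coord_apply]

lemma edge_eq_side (hb : IsTriangleBasis G p t b) (h : IsPlaneDrawing G p) (hxy : G.Adj x y)
    (hz : z ∈ openSegment ℝ (p x) (p y)) (hzl : b.coord l z = 0) (hz₀ : ∀ i, 0 ≤ b.coord i z) :
    s(x, y) = s(t (l + 1), t (l + 2)) := by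
  have hzs := mem_segment_of_coord_eq_zero b hzl (hz₀ _) (hz₀ _)
  rw [hb.apply_eq, hb.apply_eq, ← insert_endpoints_openSegment] at hzs
  rcases hzs with rfl | rfl | hzs
  · exact absurd hz (h.notMem hxy _)
  · exact absurd hz (h.notMem hxy _)
  · exact h.edge_eq hxy (hb.adj (by simp)) z hz hzs

lemma mem_range_or_mem_openTriangle (hb : IsTriangleBasis G p t b) (h : IsPlaneDrawing G p)
    (hw : ∀ i, 0 ≤ b.coord i (p w)) : w ∈ range t ∨ p w ∈ openTriangle b := by
  by_cases hpos : p w ∈ openTriangle b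
  · exact Or.inr hpos
  obtain ⟨l, hl⟩ : ∃ l, b.coord l (p w) ≤ 0 := by simpa [openTriangle] using hpos
  have hws := mem_segment_of_coord_eq_zero b (hl.antisymm (hw l)) (hw _) (hw _)
  rw [hb.apply_eq, hb.apply_eq] at hws
  rcases h.mem_segment (hb.adj (by simp)) hws with rfl | rfl <;> simp

lemma notMem_openTriangle (hb : IsTriangleBasis G p t b) (i : Fin 3) :
    p (t i) ∉ openTriangle b := fun h => by
  simpa [hb.coord_vertex] using h (i + 1)

lemma coord_nonneg_of_edge (hb : IsTriangleBasis G p t b) (h : IsPlaneDrawing G p)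
    (hxy : G.Adj x y) (hz : z ∈ segment ℝ (p x) (p y)) (hzT : z ∈ openTriangle b) (i : Fin 3) :
    0 ≤ b.coord i (p x) := by
  by_contra! hneg
  obtain ⟨z', hz', hz'₀, l, hl, hz'l⟩ := exists_first_zero b.coord hzT ⟨i, hneg⟩
  have hzx : z ≠ p x := by
    rintro rfl
    exact hneg.not_gt (hzT i)
  have hz'xy := openSegment_subset_openSegment hz (left_mem_segment ℝ _ _) hzx hz'
  rcases Sym2.eq_iff.1 (hb.edge_eq_side h hxy hz'xy hz'l hz'₀) with ⟨rfl, -⟩ | ⟨rfl, -⟩ <;>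
    simp [hb.coord_vertex] at hl

lemma exists_end_mem_openTriangle (hb : IsTriangleBasis G p t b) (h : IsPlaneDrawing G p)
    (hxy : G.Adj x y) (hz : z ∈ segment ℝ (p x) (p y)) (hzT : z ∈ openTriangle b) :
    p x ∈ openTriangle b ∨ p y ∈ openTriangle b := by
  by_contra! hout
  obtain ⟨i, rfl⟩ := (hb.mem_range_or_mem_openTriangle h
    (hb.coord_nonneg_of_edge h hxy hz hzT)).resolve_right hout.1
  obtain ⟨j, rfl⟩ := (hb.mem_range_or_mem_openTriangle h
    (hb.coord_nonneg_of_edge h hxy.symm (segment_symm ℝ _ (p y) ▸ hz) hzT)).resolve_right hout.2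
  obtain ⟨l, hli, hlj⟩ := (by decide : ∀ i j : Fin 3, ∃ l, l ≠ i ∧ l ≠ j) i j
  obtain ⟨r, s, -, -, hrs, rfl⟩ := hz
  simpa [Convex.combo_affine_apply hrs, hb.coord_vertex, hli, hlj] using hzT l

lemma edgesEndIn_openTriangle (hb : IsTriangleBasis G p t b) (h : IsPlaneDrawing G p) :
    EdgesEndIn G p (openTriangle b) :=
  fun _ _ hxy _ hz => hb.exists_end_mem_openTriangle h hxy (openSegment_subset_segment ℝ _ _ hz)

variable [Finite V] [Fact (Module.finrank ℝ E = 2)]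

lemma preconnected_of_forall_coord_nonneg (hb : IsTriangleBasis G p t b)
    (h : IsSaturatedDrawing G p) (hin : ∀ w i, 0 ≤ b.coord i (p w)) :
    (G.induce (range t)ᶜ).Preconnected := by
  have hset : (range t)ᶜ = p ⁻¹' openTriangle b := by
    ext w
    refine ⟨(hb.mem_range_or_mem_openTriangle h.1 (hin w)).resolve_left, ?_⟩
    rintro hw ⟨i, rfl⟩
    exact hb.notMem_openTriangle i hw
  exact hset ▸ h.preconnected_induce_preimage (convex_openTriangle b)
    (hb.edgesEndIn_openTriangle h.1)

end IsTriangleBasis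

end

/-! ### Folding a region into an empty triangle -/

section
variable {E : Type*} [AddCommGroup E] [Module ℝ E]

/-- The harmonic homology with axis `f = 0` and centre `o`, where `f o = 2`: the projective
involution that fixes the axis and exchanges `f = 1` with the line at infinity. -/
noncomputable def harmonicHomology (f : E →ᵃ[ℝ] ℝ) (o x : E) : E :=
  AffineMap.lineMap o x (1 - f x)⁻¹

namespace harmonicHomology

variable {f : E →ᵃ[ℝ] ℝ} {o x y z : E}

lemma eq_self (hx : f x = 0) : harmonicHomology f o x = x := by
  simp [harmonicHomology, hx]

lemma one_sub_apply (ho : f o = 2) (hx : f x ≠ 1) :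
    1 - f (harmonicHomology f o x) = (1 - f x)⁻¹ := by
  have : 1 - f x ≠ 0 := sub_ne_zero.2 hx.symm
  rw [harmonicHomology, AffineMap.apply_lineMap, AffineMap.lineMap_apply_ring', ho]
  field_simp
  ring

lemma involutive (ho : f o = 2) (hx : f x ≠ 1) :
    harmonicHomology f o (harmonicHomology f o x) = x := by
  have : 1 - f x ≠ 0 := sub_ne_zero.2 hx.symm
  rw [harmonicHomology, one_sub_apply ho hx, inv_inv, harmonicHomology,
    AffineMap.lineMap_lineMap_right, mul_inv_cancel₀ this, AffineMap.lineMap_apply_one]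

lemma mem_openSegment (hx : f x < 1) (hy : f y < 1) (hz : z ∈ openSegment ℝ x y) :
    harmonicHomology f o z ∈
      openSegment ℝ (harmonicHomology f o x) (harmonicHomology f o y) := by
  obtain ⟨a, b, ha, hb, hab, rfl⟩ := hz
  have hx' : 0 < 1 - f x := by linarith
  have hy' : 0 < 1 - f y := by linarith
  have hD : 1 - f (a • x + b • y) = a * (1 - f x) + b * (1 - f y) := by
    rw [Convex.combo_affine_apply hab, smul_eq_mul, smul_eq_mul]
    linear_combination -hab
  have : 0 < a * (1 - f x) + b * (1 - f y) := by positivity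
  refine ⟨a * (1 - f x) / (a * (1 - f x) + b * (1 - f y)),
    b * (1 - f y) / (a * (1 - f x) + b * (1 - f y)), by positivity, by positivity,
    by field_simp, ?_⟩
  simp only [harmonicHomology, hD, AffineMap.lineMap_apply_module]
  match_scalars <;> field_simp
  linear_combination -hab

lemma mem_openSegment_center (hx : f x < 0) : harmonicHomology f o x ∈ openSegment ℝ o x := by
  rw [openSegment_eq_image_lineMap]
  exact mem_image_of_mem _ ⟨inv_pos.2 (by linarith), inv_lt_one_of_one_lt₀ (by linarith)⟩

lemma apply_pos (ho : f o = 2) (hx : f x < 0) : 0 < f (harmonicHomology f o x) := by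
  have h := one_sub_apply ho (hx.trans zero_lt_one).ne
  have : (1 - f x)⁻¹ < 1 := inv_lt_one_of_one_lt₀ (by linarith)
  linarith

lemma apply_lt_one (ho : f o = 2) (hx : f x < 1) : f (harmonicHomology f o x) < 1 := by
  have h := one_sub_apply ho hx.ne
  have : 0 < (1 - f x)⁻¹ := inv_pos.2 (by linarith)
  linarith

end harmonicHomology

/-- The harmonic homology whose axis is the side opposite `b k` and whose centre is the centroid
of the triangle: it exchanges the region outside that side with a region inside the triangle. The
factor `6` gives `6 • b.coord k` the value `2` at the centroid. -/
noncomputable def sideHomology (b : AffineBasis (Fin 3) ℝ E) (k : Fin 3) (x : E) : E :=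
  harmonicHomology ((6 : ℝ) • b.coord k) (Finset.univ.centroid ℝ b) x

namespace sideHomology
variable {b : AffineBasis (Fin 3) ℝ E} {k : Fin 3} {x y z : E}

lemma apply_centroid (b : AffineBasis (Fin 3) ℝ E) (k : Fin 3) :
    ((6 : ℝ) • b.coord k) (Finset.univ.centroid ℝ b) = 2 := by
  rw [AffineMap.coe_smul, Pi.smul_apply, b.coord_apply_centroid (Finset.mem_univ k)]
  norm_num

lemma eq_self (hx : b.coord k x = 0) : sideHomology b k x = x :=
  harmonicHomology.eq_self (by simp [hx])

lemma involutive (hx : b.coord k x ≤ 0) : sideHomology b k (sideHomology b k x) = x :=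
  harmonicHomology.involutive (apply_centroid b k) (by simp; linarith)

lemma mem_openTriangle (hk : b.coord k x < 0) (hx : ∀ i ≠ k, 0 ≤ b.coord i x) :
    sideHomology b k x ∈ openTriangle b := by
  intro i
  have hk' : ((6 : ℝ) • b.coord k) x < 0 := by
    rw [AffineMap.coe_smul, Pi.smul_apply, smul_eq_mul]
    linarith
  rcases eq_or_ne i k with rfl | hi
  · simpa [sideHomology] using harmonicHomology.apply_pos (apply_centroid b i) hk'
  · obtain ⟨s, t, hs, ht, hst, he⟩ := harmonicHomology.mem_openSegment_center
      (o := Finset.univ.centroid ℝ b) hk'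
    rw [sideHomology, ← he, Convex.combo_affine_apply hst,
      b.coord_apply_centroid (Finset.mem_univ i)]
    have := hx i hi
    simp only [smul_eq_mul]
    positivity

lemma mem_openSegment (hx : b.coord k x ≤ 0) (hy : b.coord k y ≤ 0)
    (hz : z ∈ openSegment ℝ (sideHomology b k x) (sideHomology b k y)) :
    sideHomology b k z ∈ openSegment ℝ x y := by
  have hlt {w : E} (hw : b.coord k w ≤ 0) :
      ((6 : ℝ) • b.coord k) (sideHomology b k w) < 1 :=
    harmonicHomology.apply_lt_one (apply_centroid b k) (by simp; linarith)
  have := harmonicHomology.mem_openSegment (o := Finset.univ.centroid ℝ b) (hlt hx) (hlt hy) hz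
  rwa [← sideHomology, ← sideHomology, ← sideHomology, involutive hx, involutive hy] at this

end sideHomology

variable {V : Type*} {G : SimpleGraph V} {p : V → E}

/-- No vertex lies inside the triangle `t`, and no vertex beyond the side opposite `t k` lies
beyond another side too or is adjacent to a vertex that does. -/
structure IsFreeFlap (G : SimpleGraph V) (p : V → E) (t : Fin 3 → V)
    (b : AffineBasis (Fin 3) ℝ E) (k : Fin 3) : Prop extends IsTriangleBasis G p t b where
  apply_notMem_openTriangle : ∀ w, p w ∉ openTriangle b
  coord_nonneg : ∀ x y, b.coord k (p x) < 0 → x = y ∨ G.Adj x y → ∀ i ≠ k, 0 ≤ b.coord i (p y)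

open Classical in
/-- The drawing obtained from `p` by folding the vertices beyond the side opposite `b k` into the
triangle, by the homology that fixes this side. -/
noncomputable def foldIn (p : V → E) (b : AffineBasis (Fin 3) ℝ E) (k : Fin 3) (w : V) : E :=
  if b.coord k (p w) < 0 then sideHomology b k (p w) else p w

lemma foldIn_of_neg {b : AffineBasis (Fin 3) ℝ E} {k : Fin 3} {w : V} (hw : b.coord k (p w) < 0) :
    foldIn p b k w = sideHomology b k (p w) := if_pos hw

lemma foldIn_of_nonneg {b : AffineBasis (Fin 3) ℝ E} {k : Fin 3} {w : V}
    (hw : 0 ≤ b.coord k (p w)) : foldIn p b k w = p w := if_neg hw.not_gt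

lemma foldIn_of_nonpos {b : AffineBasis (Fin 3) ℝ E} {k : Fin 3} {w : V}
    (hw : b.coord k (p w) ≤ 0) : foldIn p b k w = sideHomology b k (p w) := by
  rcases hw.lt_or_eq with hw | hw
  · exact foldIn_of_neg hw
  · rw [foldIn_of_nonneg hw.ge, sideHomology.eq_self hw]

lemma IsTriangleBasis.not_adj_opposite {t : Fin 3 → V} {b : AffineBasis (Fin 3) ℝ E} {k : Fin 3}
    {x : V} (hb : IsTriangleBasis G p t b) (h : IsPlaneDrawing G p) (hk : b.coord k (p x) < 0)
    (hx : ∀ i ≠ k, 0 ≤ b.coord i (p x)) : ¬ G.Adj (t k) x := by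
  intro hadj
  obtain ⟨z, hz, -, -, -, hzk⟩ := exists_first_zero (fun _ : Unit => b.coord k) (x := p (t k))
    (by simp [hb.coord_vertex]) ⟨(), hk⟩
  have hz₀ (i : Fin 3) : 0 ≤ b.coord i z := by
    rcases eq_or_ne i k with rfl | hi
    · exact hzk.ge
    · obtain ⟨r, s, -, hs, hrs, rfl⟩ := hz
      simpa [Convex.combo_affine_apply hrs, hb.coord_vertex, hi] using mul_nonneg hs.le (hx i hi)
  rcases Sym2.eq_iff.1 (hb.edge_eq_side h hadj hz hzk hz₀) with ⟨he, -⟩ | ⟨he, -⟩ <;>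
    exact (hb.adj (by simp)).ne he

namespace IsFreeFlap

variable {t : Fin 3 → V} {b : AffineBasis (Fin 3) ℝ E} {k : Fin 3} {x y w : V}

lemma coord_nonpos (hf : IsFreeFlap G p t b k) (h : IsPlaneDrawing G p)
    (hx : b.coord k (p x) < 0) (hxy : x = y ∨ G.Adj x y) : b.coord k (p y) ≤ 0 := by
  by_contra! hy
  have hy₀ (i : Fin 3) : 0 ≤ b.coord i (p y) := by
    rcases eq_or_ne i k with rfl | hi
    · exact hy.le
    · exact hf.coord_nonneg x y hx hxy i hi
  rcases hf.mem_range_or_mem_openTriangle h hy₀ with ⟨j, rfl⟩ | hy'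
  · obtain rfl : k = j := by
      by_contra hne
      simp [hf.coord_vertex, hne] at hy
    rcases hxy with rfl | hadj
    · linarith
    · exact hf.not_adj_opposite h hx (hf.coord_nonneg x x hx (Or.inl rfl)) hadj.symm
  · exact hf.apply_notMem_openTriangle y hy'

lemma foldIn_mem_openTriangle_iff (hf : IsFreeFlap G p t b k) :
    foldIn p b k w ∈ openTriangle b ↔ b.coord k (p w) < 0 := by
  rcases lt_or_ge (b.coord k (p w)) 0 with hw | hw
  · rw [foldIn_of_neg hw]
    exact iff_of_true (sideHomology.mem_openTriangle hw (hf.coord_nonneg w w hw (Or.inl rfl))) hw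
  · rw [foldIn_of_nonneg hw]
    exact iff_of_false (hf.apply_notMem_openTriangle w) hw.not_gt

lemma openSegment_foldIn_subset (hf : IsFreeFlap G p t b k) (h : IsPlaneDrawing G p)
    (hx : b.coord k (p x) < 0) (hxy : G.Adj x y) :
    openSegment ℝ (foldIn p b k x) (foldIn p b k y) ⊆ openTriangle b := by
  refine fun z =>
    mem_openTriangle_of_mem_openSegment b (hf.foldIn_mem_openTriangle_iff.2 hx) fun i => ?_
  have hy := hf.coord_nonpos h hx (Or.inr hxy)
  rcases hy.lt_or_eq with hy | hy
  · exact (hf.foldIn_mem_openTriangle_iff.2 hy i).le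
  · rw [foldIn_of_nonneg hy.ge]
    rcases eq_or_ne i k with rfl | hi
    · exact hy.ge
    · exact hf.coord_nonneg x y hx (Or.inr hxy) i hi

lemma isPlaneDrawing_foldIn (hf : IsFreeFlap G p t b k) (h : IsPlaneDrawing G p) :
    IsPlaneDrawing G (foldIn p b k) := by
  classical
  have hmaps {x y : V} (hxy : G.Adj x y) (hx : b.coord k (p x) < 0) {z : E}
      (hz : z ∈ openSegment ℝ (foldIn p b k x) (foldIn p b k y)) :
      z ∈ openTriangle b ∧ sideHomology b k z ∈ openSegment ℝ (p x) (p y) := by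
    have hy := hf.coord_nonpos h hx (Or.inr hxy)
    refine ⟨hf.openSegment_foldIn_subset h hx hxy hz, sideHomology.mem_openSegment hx.le hy ?_⟩
    rwa [← foldIn_of_nonpos hx.le, ← foldIn_of_nonpos hy]
  refine h.of_mapsTo (fun z => if z ∈ openTriangle b then sideHomology b k z else z)
    (fun w => ?_) fun {x y} hxy z hz => ?_
  · simp only [hf.foldIn_mem_openTriangle_iff]
    split_ifs with hw
    · rw [foldIn_of_neg hw, sideHomology.involutive hw.le]
    · exact foldIn_of_nonneg (not_lt.1 hw)
  · rcases lt_or_ge (b.coord k (p x)) 0 with hx | hx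
    · obtain ⟨hzT, hz⟩ := hmaps hxy hx hz
      simpa only [if_pos hzT] using hz
    rcases lt_or_ge (b.coord k (p y)) 0 with hy | hy
    · obtain ⟨hzT, hz⟩ := hmaps hxy.symm hy (openSegment_symm ℝ (foldIn p b k x) _ ▸ hz)
      simpa only [if_pos hzT, openSegment_symm ℝ (p x)] using hz
    · rw [foldIn_of_nonneg hx, foldIn_of_nonneg hy] at hz
      have hzT : z ∉ openTriangle b := fun hzT =>
        (hf.edgesEndIn_openTriangle h hxy z hz hzT).elim (hf.apply_notMem_openTriangle x)
          (hf.apply_notMem_openTriangle y)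
      simpa only [if_neg hzT] using hz

variable [Finite V] [Fact (Module.finrank ℝ E = 2)]

theorem coord_nonneg_of_forall_isSaturatedDrawing (hf : IsFreeFlap G p t b k)
    (h : IsPlaneDrawing G p) (hmax : ∀ q : V → E, IsPlaneDrawing G q → IsSaturatedDrawing G q)
    (x : V) : 0 ≤ b.coord k (p x) := by
  by_contra! hx
  have hdraw := hf.isPlaneDrawing_foldIn h
  have hcorner (i : Fin 3) : foldIn p b k (t i) = p (t i) :=
    foldIn_of_nonneg (by rw [hf.coord_vertex]; split_ifs <;> simp)
  have hbasis : IsTriangleBasis G (foldIn p b k) t b :=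
    ⟨hf.adj, fun i => (hf.apply_eq i).trans (hcorner i).symm⟩
  set C := insert (foldIn p b k (t k)) (openTriangle b)
  have hCconvex : Convex ℝ C := by
    simpa only [hbasis.apply_eq] using convex_insert_openTriangle b k
  have hconn := (hmax _ hdraw).preconnected_induce_preimage hCconvex
    ((hbasis.edgesEndIn_openTriangle hdraw).insert hdraw (t k))
  have hxC : x ∈ foldIn p b k ⁻¹' C := Or.inr (hf.foldIn_mem_openTriangle_iff.2 hx)
  have hkC : t k ∈ foldIn p b k ⁻¹' C := Or.inl rfl
  have : Nontrivial (foldIn p b k ⁻¹' C) := ⟨⟨t k, hkC⟩, ⟨x, hxC⟩, fun he => by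
    obtain rfl : t k = x := congr_arg Subtype.val he
    simp [hf.coord_vertex, not_lt.2 zero_le_one] at hx⟩
  obtain ⟨⟨y, hy⟩, hadj : G.Adj (t k) y⟩ := hconn.exists_adj_of_nontrivial ⟨t k, hkC⟩
  rcases hy with hy | hy
  · exact hadj.ne (hdraw.injective hy).symm
  · rw [hf.foldIn_mem_openTriangle_iff] at hy
    exact hf.not_adj_opposite h hy (hf.coord_nonneg y y hy (Or.inl rfl)) hadj

end IsFreeFlap
end

lemma preconnected_induce_iUnion_fin_three {V : Type*} {G : SimpleGraph V} {S : Fin 3 → Set V}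
    (hS : ∀ i, (G.induce (S i)).Preconnected)
    (hlink : ∀ i, (S i).Nonempty → ∃ j ≠ i, ∃ x ∈ S i, ∃ y ∈ S j, x = y ∨ G.Adj x y) :
    (G.induce (⋃ i, S i)).Preconnected := by
  have hlink' (i : Fin 3) (hi : (S i).Nonempty) : ∃ j ≠ i, (S j).Nonempty ∧
      ∀ x hx y hy, x ∈ S i → y ∈ S j → (G.induce (⋃ i, S i)).Reachable ⟨x, hx⟩ ⟨y, hy⟩ := by
    have hreach {l : Fin 3} {x y : V} (hx : x ∈ S l) (hy : y ∈ S l) :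
        (G.induce (⋃ i, S i)).Reachable ⟨x, mem_iUnion_of_mem l hx⟩ ⟨y, mem_iUnion_of_mem l hy⟩ :=
      (hS l ⟨x, hx⟩ ⟨y, hy⟩).map (G.induceHomOfLE (subset_iUnion S l)).toHom
    obtain ⟨j, hj, x, hx, y, hy, hxy⟩ := hlink i hi
    have hxy : (G.induce (⋃ i, S i)).Reachable ⟨x, mem_iUnion_of_mem i hx⟩
        ⟨y, mem_iUnion_of_mem j hy⟩ := by
      rcases hxy with rfl | hxy
      · rfl
      · exact SimpleGraph.Adj.reachable hxy
    exact ⟨j, hj, ⟨y, hy⟩, fun x' _ y' _ hx' hy' =>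
      ((hreach hx' hx).trans hxy).trans (hreach hy hy')⟩
  rintro ⟨x, hx⟩ ⟨y, hy⟩
  obtain ⟨i, hi⟩ := mem_iUnion.1 hx
  obtain ⟨j, hj⟩ := mem_iUnion.1 hy
  obtain ⟨m, hmi, ⟨z, hz⟩, him⟩ := hlink' i ⟨x, hi⟩
  obtain ⟨n, hnj, ⟨w, hw⟩, hjn⟩ := hlink' j ⟨y, hj⟩
  have hzU := mem_iUnion_of_mem m hz
  rcases eq_or_ne j m with rfl | hjm
  · exact him x hx y hy hi hj
  rcases eq_or_ne i n with rfl | hin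
  · exact (hjn y hy x hx hj hi).symm
  rcases eq_or_ne i j with rfl | hij
  · exact (him x hx z hzU hi hz).trans (him y hy z hzU hj hz).symm
  obtain rfl : n = m := by omega
  exact (him x hx z hzU hi hz).trans (hjn y hy z hzU hj hz).symm

section
variable {V E : Type*} [AddCommGroup E] [Module ℝ E] [Finite V] [Fact (Module.finrank ℝ E = 2)]
  {G : SimpleGraph V} {p : V → E} {t : Fin 3 → V} {b : AffineBasis (Fin 3) ℝ E}

namespace IsTriangleBasis

lemma preconnected_of_forall_notMem_openTriangle (hb : IsTriangleBasis G p t b)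
    (h : IsPlaneDrawing G p) (hmax : ∀ q : V → E, IsPlaneDrawing G q → IsSaturatedDrawing G q)
    (hempty : ∀ w, p w ∉ openTriangle b) : (G.induce (range t)ᶜ).Preconnected := by
  have hset : (range t)ᶜ = ⋃ i, p ⁻¹' {x | b.coord i x < 0} := by
    ext w
    rw [mem_iUnion, ← not_iff_not, notMem_compl_iff]
    refine ⟨?_, fun hw => ?_⟩
    · rintro ⟨j, rfl⟩ ⟨i, hi : b.coord i (p (t j)) < 0⟩
      rw [hb.coord_vertex] at hi
      split_ifs at hi <;> linarith
    · push Not at hw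
      exact (hb.mem_range_or_mem_openTriangle h fun i => not_lt.1 (hw i)).resolve_right (hempty w)
  rw [hset]
  refine preconnected_induce_iUnion_fin_three (fun i => ?_) fun k ⟨x, hx⟩ => ?_
  · exact (hmax p h).preconnected_induce_preimage
      ((convex_Iio 0).affine_preimage (b.coord i)) (edgesEndIn_setOf_lt_zero _)
  · by_contra! hlink
    have hfree : IsFreeFlap G p t b k := ⟨hb, hempty, fun x y hx hxy i hi =>
      not_lt.1 fun hy => hxy.elim (hlink i hi x hx y hy).1 (hlink i hi x hx y hy).2⟩
    exact (hfree.coord_nonneg_of_forall_isSaturatedDrawing h hmax x).not_gt hx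

end IsTriangleBasis
end

/-! ### Laminar families of vertex sets -/

/-- A family `F` of `k`-element sets, each bounding a region whose inner vertices are `I s`, that is
laminar: regions with a common inner vertex are nested, and a member of `F` with a vertex inside
another one's region lies in that region. -/
structure IsLaminarFamily {V : Type*} [DecidableEq V] (F : Finset (Finset V)) (k : ℕ)
    (I : Finset V → Finset V) : Prop where
  card_eq : ∀ s ∈ F, s.card = k
  disjoint : ∀ s ∈ F, Disjoint s (I s)
  subset_of_mem : ∀ s ∈ F, ∀ t ∈ F, ∀ u ∈ s, u ∈ I t → s ⊆ t ∪ I t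
  nested : ∀ s ∈ F, ∀ t ∈ F, ∀ v ∈ I s, v ∈ I t → s ⊆ t ∪ I t ∨ t ⊆ s ∪ I s
  ssubset : ∀ s ∈ F, ∀ t ∈ F, s ⊆ t ∪ I t → s ≠ t → I s ⊂ I t

namespace IsLaminarFamily

variable {V : Type*} [DecidableEq V] {F : Finset (Finset V)} {k : ℕ} {I : Finset V → Finset V}
  {s t : Finset V} {u v : V}

/-- The number of members of `F` that have `v` in their region. -/
def depth (F : Finset (Finset V)) (I : Finset V → Finset V) (v : V) : ℕ :=
  (F.filter fun s => v ∈ I s).card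

lemma exists_mem_notMem (hF : IsLaminarFamily F k I) (hs : s ∈ F) (ht : t ∈ F) (hst : s ≠ t) :
    ∃ u ∈ s, u ∉ t := by
  by_contra! hsub
  exact hst (Finset.eq_of_subset_of_card_le hsub (by rw [hF.card_eq s hs, hF.card_eq t ht]))

lemma ssubset_of_mem (hF : IsLaminarFamily F k I) (hs : s ∈ F) (ht : t ∈ F) (hus : u ∈ s)
    (hut : u ∈ I t) : I s ⊂ I t := by
  refine hF.ssubset s hs t ht (hF.subset_of_mem s hs t ht u hus hut) ?_
  rintro rfl
  exact Finset.disjoint_left.1 (hF.disjoint s hs) hus hut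

lemma depth_lt_depth (hF : IsLaminarFamily F k I) (hs : s ∈ F) (hu : u ∈ s) (hv : v ∈ I s) :
    depth F I u < depth F I v := by
  refine Finset.card_lt_card ((Finset.ssubset_iff_of_subset fun t => ?_).2 ⟨s, ?_, ?_⟩)
  · simp only [Finset.mem_filter]
    exact fun ⟨ht, hut⟩ => ⟨ht, (hF.ssubset_of_mem hs ht hu hut).subset hv⟩
  · exact Finset.mem_filter.2 ⟨hs, hv⟩
  · exact fun h => Finset.disjoint_left.1 (hF.disjoint s hs) hu (Finset.mem_filter.1 h).2

lemma exists_depth_eq_zero_notMem (hF : IsLaminarFamily F k I) (ht : t ∈ F) (hv : v ∉ t ∪ I t) :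
    ∃ w ∉ t, depth F I w = 0 := by
  induction hn : depth F I v using Nat.strong_induction_on generalizing v with
  | _ n ih =>
  subst hn
  simp only [Finset.mem_union, not_or] at hv
  rcases Nat.eq_zero_or_pos (depth F I v) with h₀ | hpos
  · exact ⟨v, hv.1, h₀⟩
  obtain ⟨s, hs⟩ := Finset.card_pos.1 hpos
  obtain ⟨hs, hvs⟩ := Finset.mem_filter.1 hs
  obtain ⟨u, hus, hut⟩ := hF.exists_mem_notMem hs ht fun he => hv.2 (he ▸ hvs)
  refine ih _ (hF.depth_lt_depth hs hus hvs) ?_ rfl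
  simp only [Finset.mem_union, not_or]
  exact ⟨hut, fun hut' => hv.2 ((hF.ssubset_of_mem hs ht hus hut').subset hvs)⟩

variable [Fintype V]

lemma succ_le_card_depth_eq_zero (hF : IsLaminarFamily F k I) (hne : F.Nonempty)
    (hout : ∀ t ∈ F, ∃ v, v ∉ t ∪ I t) :
    k + 1 ≤ (Finset.univ.filter fun v => depth F I v = 0).card := by
  obtain ⟨m, hm, hmax⟩ := F.exists_max_image (fun s => (I s).card) hne
  obtain ⟨v, hv⟩ := hout m hm
  obtain ⟨w, hwm, hw⟩ := hF.exists_depth_eq_zero_notMem hm hv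
  have hm₀ : ∀ u ∈ m, depth F I u = 0 := fun u hu =>
    Finset.card_eq_zero.2 (Finset.filter_eq_empty_iff.2 fun s hs hus =>
      (hmax s hs).not_gt (Finset.card_lt_card (hF.ssubset_of_mem hm hs hu hus)))
  rw [← hF.card_eq m hm, ← Finset.card_insert_of_notMem hwm]
  refine Finset.card_le_card fun u hu => Finset.mem_filter.2 ⟨Finset.mem_univ u, ?_⟩
  rcases Finset.mem_insert.1 hu with rfl | hu
  · exact hw
  · exact hm₀ u hu

lemma card_le_card_depth_ne_zero (hF : IsLaminarFamily F k I) (hin : ∀ t ∈ F, (I t).Nonempty) :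
    F.card ≤ (Finset.univ.filter fun v => depth F I v ≠ 0).card := by
  rcases F.eq_empty_or_nonempty with rfl | ⟨t₀, ht₀⟩
  · simp
  have : Nonempty V := (hin t₀ ht₀).to_type
  have hmin : ∀ t ∈ F, ∃ v ∈ I t, ∀ u ∈ I t, depth F I v ≤ depth F I u :=
    fun t ht => (I t).exists_min_image _ (hin t ht)
  choose! f hfI hfmin using hmin
  have hf {s t : Finset V} (hs : s ∈ F) (ht : t ∈ F) (hst : f s = f t) (hsub : s ⊆ t ∪ I t) :
      s = t := by
    by_contra hne
    obtain ⟨u, hus, hut⟩ := hF.exists_mem_notMem hs ht hne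
    have hu := (Finset.mem_union.1 (hsub hus)).resolve_left hut
    exact (hfmin t ht u hu).not_gt (hst ▸ hF.depth_lt_depth hs hus (hfI s hs))
  refine Finset.card_le_card_of_injOn f (fun t ht => ?_) fun s hs t ht hst => ?_
  · have hpos : depth F I (f t) ≠ 0 :=
      (Finset.card_pos.2 ⟨t, Finset.mem_filter.2 ⟨ht, hfI t ht⟩⟩).ne'
    simpa using hpos
  · rcases hF.nested s hs t ht (f s) (hfI s hs) (hst ▸ hfI t ht) with hsub | hsub
    · exact hf hs ht hst hsub
    · exact (hf ht hs hst.symm hsub).symm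

theorem card_le (hF : IsLaminarFamily F k I) (hin : ∀ t ∈ F, (I t).Nonempty)
    (hout : ∀ t ∈ F, ∃ v, v ∉ t ∪ I t) : F.card ≤ Fintype.card V - (k + 1) := by
  rcases F.eq_empty_or_nonempty with rfl | hne
  · simp
  have hsplit := Finset.card_filter_add_card_filter_not (s := Finset.univ) fun v => depth F I v = 0
  have h₀ := hF.succ_le_card_depth_eq_zero hne hout
  have h₁ := hF.card_le_card_depth_ne_zero hin
  simp only [Finset.card_univ, ← ne_eq] at hsplit
  omega

end IsLaminarFamily

/-! ### Counting separating triangles -/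

section
variable {V E : Type*} [AddCommGroup E] [Module ℝ E] {G : SimpleGraph V} {p : V → E}

lemma IsPlaneDrawing.exists_isTriangleBasis [Fact (Module.finrank ℝ E = 2)]
    (h : IsPlaneDrawing G p) {s : Finset V} (hs : G.IsNClique 3 s) :
    ∃ t b, IsTriangleBasis G p t b ∧ (s : Set V) = range t := by
  classical
  obtain ⟨x, y, z, hxy, hxz, hyz, rfl⟩ := SimpleGraph.is3Clique_iff.1 hs
  have ht : Pairwise fun i j => G.Adj (![x, y, z] i) (![x, y, z] j) := by
    intro i j hij
    fin_cases i <;> fin_cases j <;> simp_all [G.adj_comm]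
  obtain ⟨b, hb⟩ := h.exists_affineBasis ht
  exact ⟨_, b, ⟨ht, hb⟩, by ext; simp [eq_comm, or_left_comm, or_comm]⟩

open Classical in
/-- The vertices drawn inside the triangle whose corners are the vertices in `s`. -/
noncomputable def innerVertices [Fintype V] (p : V → E) (s : Finset V) : Finset V :=
  Finset.univ.filter fun w => w ∉ s ∧ p w ∈ convexHull ℝ (p '' s)

lemma disjoint_innerVertices [Fintype V] (s : Finset V) : Disjoint s (innerVertices p s) := by
  classical
  exact Finset.disjoint_left.2 fun _ hv hv' => (Finset.mem_filter.1 hv').2.1 hv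

namespace IsTriangleBasis

variable {s s' : Finset V} {t t' : Fin 3 → V} {b b' : AffineBasis (Fin 3) ℝ E} {u v w : V}

lemma coord_nonneg_of_mem (hb : IsTriangleBasis G p t b) (hst : (s : Set V) = range t)
    (hw : w ∈ s) (i : Fin 3) : 0 ≤ b.coord i (p w) := by
  obtain ⟨j, rfl⟩ : w ∈ range t := hst ▸ hw
  rw [hb.coord_vertex]
  split_ifs <;> simp

variable [Fintype V]

lemma mem_innerVertices_iff (hb : IsTriangleBasis G p t b) (h : IsPlaneDrawing G p)
    (hst : (s : Set V) = range t) : w ∈ innerVertices p s ↔ p w ∈ openTriangle b := by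
  have hhull : convexHull ℝ (p '' s) = {x | ∀ i, 0 ≤ b.coord i x} := by
    rw [hst, ← range_comp, ← b.convexHull_eq_nonneg_coord, funext hb.apply_eq, Function.comp_def]
  have hmem : w ∈ s ↔ w ∈ range t := by rw [← hst, Finset.mem_coe]
  simp only [innerVertices, Finset.mem_filter, Finset.mem_univ, true_and, hhull, hmem,
    mem_ofPred_eq]
  refine ⟨fun hw => (hb.mem_range_or_mem_openTriangle h hw.2).resolve_left hw.1,
    fun hw => ⟨?_, fun i => (hw i).le⟩⟩
  rintro ⟨i, rfl⟩
  exact hb.notMem_openTriangle i hw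

variable [DecidableEq V]

lemma mem_union_innerVertices_iff (hb : IsTriangleBasis G p t b) (h : IsPlaneDrawing G p)
    (hst : (s : Set V) = range t) :
    w ∈ s ∪ innerVertices p s ↔ ∀ i, 0 ≤ b.coord i (p w) := by
  rw [Finset.mem_union, hb.mem_innerVertices_iff h hst]
  refine ⟨?_, fun hw => ?_⟩
  · rintro (hw | hw) i
    · exact hb.coord_nonneg_of_mem hst hw i
    · exact (hw i).le
  · rw [← Finset.mem_coe, hst]
    exact hb.mem_range_or_mem_openTriangle h hw

lemma subset_union_innerVertices (hb : IsTriangleBasis G p t b) (h : IsPlaneDrawing G p)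
    (hst : (s : Set V) = range t) (hs' : G.IsClique s') (hu : u ∈ s')
    (hu' : u ∈ innerVertices p s) :
    s' ⊆ s ∪ innerVertices p s := by
  intro w hw
  rcases eq_or_ne w u with rfl | hwu
  · exact Finset.mem_union_right _ hu'
  · exact (hb.mem_union_innerVertices_iff h hst).2 (hb.coord_nonneg_of_edge h (hs' hw hu hwu)
      (right_mem_segment ℝ _ _) ((hb.mem_innerVertices_iff h hst).1 hu'))

lemma subset_or_subset (hb : IsTriangleBasis G p t b) (hb' : IsTriangleBasis G p t' b')
    (h : IsPlaneDrawing G p) (hst : (s : Set V) = range t) (hst' : (s' : Set V) = range t')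
    (hs' : G.IsClique s') (hv : v ∈ innerVertices p s) (hv' : v ∈ innerVertices p s') :
    s ⊆ s' ∪ innerVertices p s' ∨ s' ⊆ s ∪ innerVertices p s := by
  refine or_iff_not_imp_left.2 fun hsub => ?_
  obtain ⟨x, hx, hxs'⟩ := Finset.not_subset.1 hsub
  rw [hb'.mem_union_innerVertices_iff h hst'] at hxs'
  push Not at hxs'
  obtain ⟨z, hz, hz', l, -, hzl⟩ := exists_first_zero b'.coord
    ((hb'.mem_innerVertices_iff h hst').1 hv') hxs'
  have hzs : z ∈ openTriangle b := mem_openTriangle_of_mem_openSegment b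
    ((hb.mem_innerVertices_iff h hst).1 hv) (hb.coord_nonneg_of_mem hst hx) hz
  have hside := mem_segment_of_coord_eq_zero b' hzl (hz' _) (hz' _)
  rw [hb'.apply_eq, hb'.apply_eq] at hside
  obtain ⟨i, hi⟩ : ∃ i, p (t' i) ∈ openTriangle b :=
    (hb.exists_end_mem_openTriangle h (hb'.adj (by simp)) hside hzs).elim
      (fun hi => ⟨_, hi⟩) fun hi => ⟨_, hi⟩
  exact hb.subset_union_innerVertices h hst hs' (hst'.symm.subset (mem_range_self i))
    ((hb.mem_innerVertices_iff h hst).2 hi)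

lemma innerVertices_ssubset (hb : IsTriangleBasis G p t b) (hb' : IsTriangleBasis G p t' b')
    (h : IsPlaneDrawing G p) (hst : (s : Set V) = range t) (hst' : (s' : Set V) = range t')
    (hsub : s ⊆ s' ∪ innerVertices p s') (hu : u ∈ s) (hu' : u ∉ s') :
    innerVertices p s ⊂ innerVertices p s' := by
  have hus' := (Finset.mem_union.1 (hsub hu)).resolve_left hu'
  refine (Finset.ssubset_iff_of_subset fun w hw => ?_).2
    ⟨u, hus', Finset.disjoint_left.1 (disjoint_innerVertices s) hu⟩
  rw [hb.mem_innerVertices_iff h hst] at hw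
  rw [hb'.mem_innerVertices_iff h hst'] at hus' ⊢
  intro i
  obtain ⟨j, rfl⟩ := hst.subset hu
  rw [apply_eq_sum_coord b (b'.coord i)]
  refine Finset.sum_pos' (fun l _ => mul_nonneg (hw l).le ?_) ⟨j, Finset.mem_univ j, ?_⟩
  · rw [hb.apply_eq]
    exact (hb'.mem_union_innerVertices_iff h hst').1 (hsub (hst.symm.subset (mem_range_self l))) i
  · rw [hb.apply_eq]
    exact mul_pos (hw j) (hus' i)

end IsTriangleBasis

variable [Fintype V] [Fact (Module.finrank ℝ E = 2)] {F : Finset (Finset V)} {s : Finset V}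

lemma IsPlaneDrawing.isLaminarFamily_innerVertices [DecidableEq V] (h : IsPlaneDrawing G p)
    (hF : ∀ s ∈ F, G.IsNClique 3 s) : IsLaminarFamily F 3 (innerVertices p) where
  card_eq s hs := (hF s hs).card_eq
  disjoint s _ := disjoint_innerVertices s
  subset_of_mem s hs t ht u hus hut := by
    obtain ⟨_, _, hb, hst⟩ := h.exists_isTriangleBasis (hF t ht)
    exact hb.subset_union_innerVertices h hst (hF s hs).isClique hus hut
  nested s hs t ht v hvs hvt := by
    obtain ⟨_, _, hb, hst⟩ := h.exists_isTriangleBasis (hF s hs)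
    obtain ⟨_, _, hb', hst'⟩ := h.exists_isTriangleBasis (hF t ht)
    exact hb.subset_or_subset hb' h hst hst' (hF t ht).isClique hvs hvt
  ssubset s hs t ht hsub hne := by
    obtain ⟨_, _, hb, hst⟩ := h.exists_isTriangleBasis (hF s hs)
    obtain ⟨_, _, hb', hst'⟩ := h.exists_isTriangleBasis (hF t ht)
    obtain ⟨u, hus, hut⟩ : ∃ u ∈ s, u ∉ t := by
      by_contra! hsub'
      exact hne (Finset.eq_of_subset_of_card_le hsub' (by rw [(hF s hs).2, (hF t ht).2]))
    exact hb.innerVertices_ssubset hb' h hst hst' hsub hus hut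

lemma IsSaturatedDrawing.exists_notMem_union_innerVertices [DecidableEq V]
    (h : IsSaturatedDrawing G p) (hs : G.IsNClique 3 s)
    (hsep : ¬ (G.induce (s : Set V)ᶜ).Preconnected) : ∃ v, v ∉ s ∪ innerVertices p s := by
  obtain ⟨t, b, hb, hst⟩ := h.1.exists_isTriangleBasis hs
  by_contra! hall
  exact hsep (hst ▸ hb.preconnected_of_forall_coord_nonneg h fun w =>
    (hb.mem_union_innerVertices_iff h.1 hst).1 (hall w))

lemma IsPlaneDrawing.innerVertices_nonempty (h : IsPlaneDrawing G p)
    (hmax : ∀ q : V → E, IsPlaneDrawing G q → IsSaturatedDrawing G q) (hs : G.IsNClique 3 s)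
    (hsep : ¬ (G.induce (s : Set V)ᶜ).Preconnected) : (innerVertices p s).Nonempty := by
  obtain ⟨t, b, hb, hst⟩ := h.exists_isTriangleBasis hs
  by_contra hempty
  rw [Finset.not_nonempty_iff_eq_empty, Finset.eq_empty_iff_forall_notMem] at hempty
  exact hsep (hst ▸ hb.preconnected_of_forall_notMem_openTriangle h hmax fun w hw =>
    hempty w ((hb.mem_innerVertices_iff h hst).2 hw))

theorem triangulation_sepTriangle_count_general (hV : 4 ≤ Fintype.card V)
    (h : IsPlaneDrawing G p) (hmax : ∀ q : V → E, IsPlaneDrawing G q → IsSaturatedDrawing G q) :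
    {s : Finset V | G.IsNClique 3 s ∧ ¬ (G.induce (s : Set V)ᶜ).Connected}.ncard ≤
      Fintype.card V - 4 := by
  classical
  set T := {s : Finset V | G.IsNClique 3 s ∧ ¬ (G.induce (s : Set V)ᶜ).Connected}
  have hclique : ∀ s ∈ T.toFinset, G.IsNClique 3 s := fun s hs => (mem_toFinset.1 hs).1
  have hsep : ∀ s ∈ T.toFinset, ¬ (G.induce (s : Set V)ᶜ).Preconnected := by
    intro s hs hpre
    obtain ⟨v, hv⟩ : (s : Set V)ᶜ.Nonempty := by
      obtain ⟨v, hv⟩ := Finset.exists_mem_notMem_of_card_lt_card (s := s) (t := Finset.univ)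
        (by rw [(hclique s hs).card_eq, Finset.card_univ]; omega)
      exact ⟨v, hv.2⟩
    exact (mem_toFinset.1 hs).2 ((SimpleGraph.connected_iff _).2 ⟨hpre, ⟨v, hv⟩⟩)
  rw [ncard_eq_toFinset_card']
  exact (h.isLaminarFamily_innerVertices hclique).card_le
    (fun s hs => h.innerVertices_nonempty hmax (hclique s hs) (hsep s hs))
    fun s hs => (hmax p h).exists_notMem_union_innerVertices (hclique s hs) (hsep s hs)

end

lemma exists_isSepTriangle_iff {n : ℕ} {G : SimpleGraph (Fin n)} {s : Finset (Fin n)} :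
    (∃ a b c, s = {a, b, c} ∧ IsSepTriangle G a b c) ↔
      G.IsNClique 3 s ∧ ¬ (G.induce (s : Set (Fin n))ᶜ).Connected := by
  have hcompl (a b c : Fin n) : {v | v ∉ ({a, b, c} : Set (Fin n))} =
      ((({a, b, c} : Finset (Fin n)) : Set (Fin n)))ᶜ := by
    simp [compl_def]
  simp only [SimpleGraph.is3Clique_iff, IsSepTriangle]
  constructor
  · rintro ⟨a, b, c, rfl, hab, hbc, hac, hsep⟩
    exact ⟨⟨a, b, c, hab, hac, hbc, rfl⟩, hcompl a b c ▸ hsep⟩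
  · rintro ⟨⟨a, b, c, hab, hac, hbc, rfl⟩, hsep⟩
    exact ⟨a, b, c, rfl, hab, hbc, hac, hcompl a b c ▸ hsep⟩

/-- Every planar triangulation on n ≥ 4 vertices has at most n − 4 separating
triangles. -/
theorem triangulation_sepTriangle_count
    (n : ℕ) (hn : 4 ≤ n) (G : SimpleGraph (Fin n)) (hG : IsTriangulation G) :
    Set.ncard {t : Finset (Fin n) |
      ∃ a b c : Fin n, t = {a, b, c} ∧ IsSepTriangle G a b c} ≤ n - 4 := by
  obtain ⟨⟨p, hp⟩, hmax⟩ := hG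
  have : Fact (Module.finrank ℝ (EuclideanSpace ℝ (Fin 2)) = 2) := ⟨by simp⟩
  have hsat (q) (hq : IsPlaneDrawing G q) : IsSaturatedDrawing G q :=
    ⟨hq, fun huv hadj hq' => hmax _ _ huv hadj ⟨q, isPlanarEmbedding_iff_isPlaneDrawing.2 hq'⟩⟩
  simpa only [exists_isSepTriangle_iff, Fintype.card_fin] using
    triangulation_sepTriangle_count_general (by simpa using hn)
      (isPlanarEmbedding_iff_isPlaneDrawing.1 hp) hsat
end

section
/- In a planar triangulation, every vertex v of a separating triangle D is incident to at least one edge that lies inside D and belongs to no separating triangle. -/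
/-!
Fix a straight-line drawing of the triangulation and an affine height function. A vertex `z` that is
not a highest one has a higher neighbour. To see this, look from `z` towards a higher vertex. If the
view is blocked at an inner point `q` of an edge `xy`, say with `y` above `z`, turn within the
triangle `z q y` to the vertex `w` making the smallest angle with the ray `zq`. No edge blocks the
view from `z` to `w`, as it would have to leave that triangle through `zq` or `xy`. So `z` sees a
higher vertex, and they are adjacent by maximality of the triangulation.

Now let `K` be a side of a vertex cut `T`. The highest vertex is unique after a perturbation, and
climbing inside `K` and inside the complementary side can only stop there or at `T`. Hence no
height puts a vertex of `K` and a vertex outside `K` both above all of `T`. By Hahn-Banach, every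
segment between such vertices meets the convex hull of `T`. If `T = {d, e}` for a triangle `d e v`
with `v ∉ K`, it follows that `K` is drawn strictly on the other side of the line `de` from `v`.
Shearing the half-plane of `v` along `de` then gives another drawing, in which `v` and a vertex of
`K` do both lie above `d` and `e` for a suitable height. This contradiction shows that every vertex
of a triangle has a neighbour in each side of it.

So `v` has a neighbour `u` in the given side `I`. If `vu` lies on a separating triangle `v u w`,
then some side of `v u w` is properly contained in `I`, and induction on `I` applies.
-/

open Filter Topology

section Segments

variable {E : Type*} [AddCommGroup E] [Module ℝ E]

theorem segment_trichotomy_of_collinear {x y z q : E} (h : Collinear ℝ {x, y, z})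
    (hq : q ∈ segment ℝ x y) :
    z ∈ segment ℝ x y ∨ x ∈ segment ℝ z q ∨ y ∈ segment ℝ z q := by
  simp only [mem_segment_iff_wbtw] at hq ⊢
  rcases h.wbtw_or_wbtw_or_wbtw with hy | hz | hx
  · exact .inr (.inr (hy.trans_left_right hq).symm)
  · exact .inl hz.symm
  · exact .inr (.inl (hx.trans_right_left hq))

theorem map_mem_uIcc_of_mem_segment (f : E →ᵃ[ℝ] ℝ) {x y m : E} (hm : m ∈ segment ℝ x y) :
    f m ∈ Set.uIcc (f x) (f y) := by
  rw [← segment_eq_uIcc, ← image_segment]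
  exact Set.mem_image_of_mem f hm

theorem eq_left_of_mem_segment (f : E →ᵃ[ℝ] ℝ) {x y m : E} (hm : m ∈ segment ℝ x y)
    (hx : f m ≤ f x) (hy : f m < f y) : m = x := by
  obtain ⟨a, b, ha, hb, hab, rfl⟩ := hm
  rw [Convex.combo_affine_apply hab, smul_eq_mul, smul_eq_mul] at hx hy
  obtain rfl : a = 1 - b := by linarith
  have hxy : f x < f y := by
    by_contra! hyx
    nlinarith
  obtain rfl : b = 0 := by nlinarith [hxy]
  rw [sub_zero, one_smul, zero_smul, add_zero]

theorem neg_of_segment_inter_nonempty (f : E →ᵃ[ℝ] ℝ) {d e x y : E}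
    (hd : f d = 0) (he : f e = 0) (hde : (segment ℝ x y ∩ segment ℝ d e).Nonempty)
    (hx : 0 < f x) (hy : y ∉ segment ℝ d e) : f y < 0 := by
  obtain ⟨q, ⟨a, b, ha, hb, hab, rfl⟩, hq⟩ := hde
  have hfq : f (a • x + b • y) = 0 := by
    simpa only [hd, he, Set.uIcc_self, Set.mem_singleton_iff] using map_mem_uIcc_of_mem_segment f hq
  rw [Convex.combo_affine_apply hab, smul_eq_mul, smul_eq_mul] at hfq
  obtain rfl | ha := ha.eq_or_lt
  · obtain rfl : b = 1 := by linarith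
    rw [zero_smul, one_smul, zero_add] at hq
    exact absurd hq hy
  · by_contra! hfy
    linarith [mul_pos ha hx, mul_nonneg hb hfy]

theorem mem_segment_of_coord_eq_zero_s15 {ι : Type*} [Finite ι] (B : AffineBasis ι ℝ E) {i j : ι}
    (hij : i ≠ j) {m : E} (hi : 0 ≤ B.coord i m) (hj : 0 ≤ B.coord j m)
    (h : ∀ k, k ≠ i ∧ k ≠ j → B.coord k m = 0) : m ∈ segment ℝ (B i) (B j) := by
  have := Fintype.ofFinite ι
  refine ⟨B.coord i m, B.coord j m, hi, hj, ?_, ?_⟩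
  · rw [← Fintype.sum_eq_add i j hij h, B.sum_coord_apply_eq_one]
  · rw [← Fintype.sum_eq_add (f := fun k ↦ B.coord k m • B k) i j hij
      fun k hk ↦ by rw [h k hk, zero_smul], B.linear_combination_coord_eq_self]

theorem mem_line_of_coord_mul_eq (B : AffineBasis (Fin 3) ℝ E) {q r : E} (hq : B.coord 2 q ≠ 0)
    (h : B.coord 2 q * B.coord 1 r = B.coord 1 q * B.coord 2 r) : r ∈ line[ℝ, B 0, q] := by
  obtain ⟨t, ht⟩ : ∃ t, B.coord 2 r = t * B.coord 2 q := ⟨_, (div_mul_cancel₀ _ hq).symm⟩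
  have coord_eq : ∀ i ≠ 0, B.coord i (AffineMap.lineMap (B 0) q t) = B.coord i r := by
    intro i hi
    rw [AffineMap.apply_lineMap, B.coord_apply_ne hi, AffineMap.lineMap_apply_ring', sub_zero,
      add_zero]
    obtain rfl | rfl : i = 1 ∨ i = 2 := by omega
    · exact mul_left_cancel₀ hq (by rw [h, ht]; ring)
    · exact ht.symm
  have hsum := B.sum_coord_apply_eq_one r
  rw [← B.sum_coord_apply_eq_one (AffineMap.lineMap (B 0) q t), Fin.sum_univ_three,
    Fin.sum_univ_three, coord_eq 1 (by decide), coord_eq 2 (by decide)] at hsum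
  have hr : AffineMap.lineMap (B 0) q t = r := B.ext_elem fun i ↦ by
    by_cases hi : i = 0
    · subst hi
      linarith
    · exact coord_eq i hi
  exact hr ▸ AffineMap.lineMap_mem_affineSpan_pair t (B 0) q

theorem sum_coord_mul_apply {ι : Type*} [Fintype ι] (B : AffineBasis ι ℝ E) (f : E →ᵃ[ℝ] ℝ)
    (q : E) : ∑ i, B.coord i q * f (B i) = f q := by
  have h := congrArg f (B.affineCombination_coord_eq_self q)
  rwa [Finset.map_affineCombination _ _ _ (B.sum_coord_apply_eq_one q),
    Finset.affineCombination_eq_linear_combination _ _ _ (B.sum_coord_apply_eq_one q)] at h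

theorem linear_smul_sub (f : E →ᵃ[ℝ] ℝ) (c : ℝ) (d e : E) :
    f.linear (c • (e - d)) = c * (f e - f d) := by
  rw [map_smul, ← vsub_eq_sub e d, f.linearMap_vsub, vsub_eq_sub, smul_eq_mul]

theorem exists_affineMap_injective_comp {ι : Type*} [Finite ι] {p : ι → E}
    (hp : Function.Injective p) (φ : E →ᵃ[ℝ] ℝ) :
    ∃ ψ : E →ᵃ[ℝ] ℝ, Function.Injective (ψ ∘ p) ∧
      ∀ i j, φ (p i) < φ (p j) → ψ (p i) < ψ (p j) := by
  obtain ⟨g, hg⟩ := Module.exists_dual_forall_apply_ne_zero (K := ℝ)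
    (fun ij : {ij : ι × ι // ij.1 ≠ ij.2} ↦ p ij.1.1 - p ij.1.2)
    fun ij ↦ sub_ne_zero.2 (hp.ne ij.2)
  replace hg : ∀ i j, i ≠ j → g (p i) ≠ g (p j) := fun i j hij h ↦
    hg ⟨(i, j), hij⟩ (by rw [map_sub, h, sub_self])
  have hpert : ∀ i j, φ (p i) < φ (p j) →
      ∀ᶠ ε : ℝ in 𝓝[>] 0, φ (p i) + ε * g (p i) < φ (p j) + ε * g (p j) := by
    intro i j hij
    have hlim : ∀ k, Tendsto (fun ε : ℝ ↦ φ (p k) + ε * g (p k)) (𝓝[>] 0) (𝓝 (φ (p k))) :=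
      fun k ↦ tendsto_nhdsWithin_of_tendsto_nhds (Continuous.tendsto' (by fun_prop) _ _ (by simp))
    exact (hlim i).eventually_lt (hlim j) hij
  obtain ⟨ε, hε, hε₀⟩ := ((eventually_all.2 fun i ↦ eventually_all.2 fun j ↦
    eventually_all.2 (hpert i j)).and self_mem_nhdsWithin).exists
  refine ⟨φ + ε • g.toAffineMap, fun i j hij ↦ ?_, hε⟩
  change φ (p i) + ε * g (p i) = φ (p j) + ε * g (p j) at hij
  rcases lt_trichotomy (φ (p i)) (φ (p j)) with hlt | heq | hgt
  · exact absurd hij (hε i j hlt).ne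
  · rw [heq, add_right_inj, mul_right_inj' (ne_of_gt hε₀)] at hij
    exact not_imp_not.1 (hg i j) hij
  · exact absurd hij (hε j i hgt).ne'

end Segments

section Topological

theorem isCompact_segment {E : Type*} [AddCommGroup E] [Module ℝ E] [TopologicalSpace E]
    [IsTopologicalAddGroup E] [ContinuousSMul ℝ E] (x y : E) : IsCompact (segment ℝ x y) := by
  rw [← convexHull_pair]
  exact (Set.toFinite {x, y}).isCompact_convexHull ℝ

theorem exists_first_mem_segment {E : Type*} [NormedAddCommGroup E] [NormedSpace ℝ E] {B : Set E}
    (hB : IsClosed B) {z w : E} (hw : w ∈ B) :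
    ∃ q ∈ segment ℝ z w, q ∈ B ∧ segment ℝ z q ∩ B ⊆ {q} := by
  obtain ⟨q, ⟨hqs, hqB⟩, hmin⟩ := ((isCompact_segment z w).inter_right hB).exists_isMinOn
    ⟨w, right_mem_segment ℝ z w, hw⟩ (continuous_const.dist continuous_id).continuousOn
      (f := fun x ↦ dist z x)
  refine ⟨q, hqs, hqB, fun r ⟨hrs, hrB⟩ ↦ ?_⟩
  have hle : dist z q ≤ dist z r :=
    hmin ⟨(convex_segment z w).segment_subset (left_mem_segment ℝ z w) hqs hrs, hrB⟩
  exact dist_le_zero.1 (by linarith [dist_add_dist_of_mem_segment hrs])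

theorem exists_mem_segment_eq_zero {E : Type*} [AddCommGroup E] [Module ℝ E] [TopologicalSpace E]
    [IsTopologicalAddGroup E] [ContinuousSMul ℝ E] {f₁ f₂ : E → ℝ}
    (hf₁ : Continuous f₁) (hf₂ : Continuous f₂) {m g : E} (h₁ : 0 < f₁ m) (h₂ : 0 < f₂ m)
    (hg : ¬ (0 ≤ f₁ g ∧ 0 ≤ f₂ g)) :
    ∃ m' ∈ segment ℝ m g, (f₁ m' = 0 ∧ 0 ≤ f₂ m') ∨ (f₂ m' = 0 ∧ 0 ≤ f₁ m') := by
  have hmin : min (f₁ g) (f₂ g) ≤ 0 := by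
    rw [← le_min_iff, not_le] at hg
    exact hg.le
  obtain ⟨m', hm', h0⟩ := (convex_segment (𝕜 := ℝ) m g).isPreconnected.intermediate_value
    (right_mem_segment ℝ m g) (left_mem_segment ℝ m g) (hf₁.min hf₂).continuousOn
    ⟨hmin, (lt_min h₁ h₂).le⟩
  beta_reduce at h0
  refine ⟨m', hm', ?_⟩
  rcases le_total (f₁ m') (f₂ m') with h | h
  · rw [min_eq_left h] at h0
    exact .inl ⟨h0, h0 ▸ h⟩
  · rw [min_eq_right h] at h0
    exact .inr ⟨h0, h0 ▸ h⟩

end Topological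

section Shear

variable {E : Type*} [AddCommGroup E] [Module ℝ E]

/-- The map fixing the half-space `f ≤ 0` and acting on `0 ≤ f` as the affine shear along `a`. It is
meant for `a` parallel to the level sets of `f`, that is `f.linear a = 0`. -/
def halfShear (f : E →ᵃ[ℝ] ℝ) (a z : E) : E :=
  z + max (f z) 0 • a

theorem apply_halfShear {f : E →ᵃ[ℝ] ℝ} {a : E} (ha : f.linear a = 0) (z : E) :
    f (halfShear f a z) = f z := by
  rw [halfShear, add_comm, ← vadd_eq_add, f.map_vadd, map_smul, ha, smul_zero, zero_vadd]

theorem halfShear_injective {f : E →ᵃ[ℝ] ℝ} {a : E} (ha : f.linear a = 0) :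
    Function.Injective (halfShear f a) := by
  intro z w hzw
  have hf : f z = f w := by rw [← apply_halfShear ha z, hzw, apply_halfShear ha w]
  rwa [halfShear, halfShear, hf, add_left_inj] at hzw

theorem segment_halfShear_subset (f : E →ᵃ[ℝ] ℝ) (a : E) {z w : E}
    (hzw : 0 ≤ f z ∧ 0 ≤ f w ∨ f z ≤ 0 ∧ f w ≤ 0) :
    segment ℝ (halfShear f a z) (halfShear f a w) ⊆ halfShear f a '' segment ℝ z w := by
  rintro _ ⟨s, t, hs, ht, hst, rfl⟩
  refine ⟨s • z + t • w, ⟨s, t, hs, ht, hst, rfl⟩, ?_⟩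
  have hmax : max (f (s • z + t • w)) 0 = s * max (f z) 0 + t * max (f w) 0 := by
    rw [Convex.combo_affine_apply hst, smul_eq_mul, smul_eq_mul]
    rcases hzw with ⟨hz, hw⟩ | ⟨hz, hw⟩
    · rw [max_eq_left hz, max_eq_left hw,
        max_eq_left (add_nonneg (mul_nonneg hs hz) (mul_nonneg ht hw))]
    · rw [max_eq_right hz, max_eq_right hw, max_eq_right (add_nonpos
        (mul_nonpos_of_nonneg_of_nonpos hs hz) (mul_nonpos_of_nonneg_of_nonpos ht hw)),
        mul_zero, mul_zero, add_zero]
  simp only [halfShear, hmax]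
  module

end Shear

/-- The Euclidean plane, in which graphs are drawn. -/
abbrev Plane := EuclideanSpace ℝ (Fin 2)

theorem Plane.exists_affineBasis {a b c : Plane} (h : ¬ Collinear ℝ {a, b, c}) :
    ∃ B : AffineBasis (Fin 3) ℝ Plane, ⇑B = ![a, b, c] := by
  have hind : AffineIndependent ℝ ![a, b, c] := affineIndependent_iff_not_collinear_set.2 h
  exact ⟨⟨![a, b, c], hind, hind.affineSpan_eq_top_iff_card_eq_finrank_add_one.2 (by simp)⟩, rfl⟩

section Drawing

variable {n : ℕ} {G : SimpleGraph (Fin n)} {p : Fin n → Plane}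

/-- The union of the points and edges of the straight-line drawing `p` of the subgraph of `G`
induced by `S`. A vertex `g` is included as the degenerate segment from `p g` to itself. -/
def drawing (G : SimpleGraph (Fin n)) (p : Fin n → Plane) (S : Set (Fin n)) : Set Plane :=
  {m | ∃ g ∈ S, ∃ h ∈ S, (g = h ∨ G.Adj g h) ∧ m ∈ segment ℝ (p g) (p h)}

/-- The vertices `u` and `v` see each other in the drawing `p` of `G`: the segment between them
meets the drawing in its endpoints only. -/
def Sees (G : SimpleGraph (Fin n)) (p : Fin n → Plane) (u v : Fin n) : Prop :=
  segment ℝ (p u) (p v) ∩ drawing G p Set.univ ⊆ {p u, p v}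

theorem mem_drawing {S : Set (Fin n)} {w : Fin n} (hw : w ∈ S) : p w ∈ drawing G p S :=
  ⟨w, hw, w, hw, .inl rfl, left_mem_segment ℝ _ _⟩

theorem isClosed_drawing (G : SimpleGraph (Fin n)) (p : Fin n → Plane) (S : Set (Fin n)) :
    IsClosed (drawing G p S) := by
  have hunion : drawing G p S =
      ⋃ e ∈ {e : Fin n × Fin n | e.1 ∈ S ∧ e.2 ∈ S ∧ (e.1 = e.2 ∨ G.Adj e.1 e.2)},
        segment ℝ (p e.1) (p e.2) := by
    ext m
    simp only [Set.mem_iUnion, Prod.exists, exists_prop]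
    exact ⟨fun ⟨g, hg, h, hh, hgh, hm⟩ ↦ ⟨g, h, ⟨hg, hh, hgh⟩, hm⟩,
      fun ⟨g, h, ⟨hg, hh, hgh⟩, hm⟩ ↦ ⟨g, hg, h, hh, hgh, hm⟩⟩
  rw [hunion]
  exact (Set.toFinite _).isClosed_biUnion fun e _ ↦ (isCompact_segment _ _).isClosed

namespace IsPlanarEmbedding

theorem mem_of_mem_drawing (hp : IsPlanarEmbedding G p) {S : Set (Fin n)} {w : Fin n}
    (hw : p w ∈ drawing G p S) : w ∈ S := by
  obtain ⟨g, hg, h, hh, rfl | hgh, hm⟩ := hw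
  · rw [segment_same, Set.mem_singleton_iff] at hm
    exact hp.1 hm ▸ hg
  · rcases hp.2.1 g h w hgh hm with rfl | rfl
    exacts [hg, hh]

theorem sup_edge (hp : IsPlanarEmbedding G p) {u v : Fin n} (huv : Sees G p u v) :
    IsPlanarEmbedding (G ⊔ SimpleGraph.fromEdgeSet {s(u, v)}) p := by
  have adj_cases : ∀ {x y}, (G ⊔ SimpleGraph.fromEdgeSet {s(u, v)}).Adj x y →
      G.Adj x y ∨ (x = u ∧ y = v) ∨ (x = v ∧ y = u) :=
    fun hxy ↦ hxy.imp_right fun hxy ↦ Sym2.eq_iff.1 hxy.1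
  have new_vertex : ∀ w, p w ∈ segment ℝ (p u) (p v) → w = u ∨ w = v := fun w hw ↦
    (huv ⟨hw, mem_drawing (Set.mem_univ w)⟩).imp (hp.1 ·) (hp.1 ·)
  have new_edge : ∀ g h, G.Adj g h →
      segment ℝ (p u) (p v) ∩ segment ℝ (p g) (p h) ⊆ p '' (({u, v} : Set (Fin n)) ∩ {g, h}) := by
    rintro g h hgh m ⟨hm, hm'⟩
    rcases huv ⟨hm, g, trivial, h, trivial, .inr hgh, hm'⟩ with rfl | rfl
    · exact ⟨u, ⟨.inl rfl, hp.2.1 g h u hgh hm'⟩, rfl⟩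
    · exact ⟨v, ⟨.inr rfl, hp.2.1 g h v hgh hm'⟩, rfl⟩
  refine ⟨hp.1, fun x y w hxy hw ↦ ?_, fun x y g h hxy hgh hne ↦ ?_⟩
  · rcases adj_cases hxy with hxy | ⟨rfl, rfl⟩ | ⟨rfl, rfl⟩
    · exact hp.2.1 x y w hxy hw
    · exact new_vertex w hw
    · exact (new_vertex w (segment_symm ℝ (p x) (p y) ▸ hw)).symm
  · rcases adj_cases hxy with hxy' | hxy' <;> rcases adj_cases hgh with hgh' | hgh'
    · exact hp.2.2 x y g h hxy' hgh' hne
    · rw [Set.inter_comm, Set.inter_comm {x, y}]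
      rcases hgh' with ⟨rfl, rfl⟩ | ⟨rfl, rfl⟩
      · exact new_edge x y hxy'
      · rw [segment_symm, Set.pair_comm g]
        exact new_edge x y hxy'
    · rcases hxy' with ⟨rfl, rfl⟩ | ⟨rfl, rfl⟩
      · exact new_edge g h hgh'
      · rw [segment_symm, Set.pair_comm x]
        exact new_edge g h hgh'
    · exact absurd (by grind) hne

theorem comp (hp : IsPlanarEmbedding G p) {T : Plane → Plane} (hT : Function.Injective T)
    (hseg : ∀ u v, G.Adj u v →
      segment ℝ (T (p u)) (T (p v)) ⊆ T '' segment ℝ (p u) (p v)) :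
    IsPlanarEmbedding G (T ∘ p) := by
  refine ⟨hT.comp hp.1, fun u v w huv hw ↦ ?_, ?_⟩
  · obtain ⟨m, hm, hmw⟩ := hseg u v huv hw
    exact hp.2.1 u v w huv (hT hmw ▸ hm)
  · rintro u v x y huv hxy hne m ⟨hm, hm'⟩
    obtain ⟨r, hr, rfl⟩ := hseg u v huv hm
    obtain ⟨r', hr', hrr⟩ := hseg x y hxy hm'
    obtain ⟨w, hw, rfl⟩ := hp.2.2 u v x y huv hxy hne ⟨hr, hT hrr ▸ hr'⟩
    exact ⟨w, hw, rfl⟩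

theorem not_collinear (hp : IsPlanarEmbedding G p) {a b c : Fin n} (hab : G.Adj a b)
    (hbc : G.Adj b c) (hac : G.Adj a c) : ¬ Collinear ℝ {p a, p b, p c} := by
  intro h
  rcases h.wbtw_or_wbtw_or_wbtw with hb | hc | ha
  · exact (hp.2.1 a c b hac hb.mem_segment).elim hab.ne' hbc.ne
  · exact (hp.2.1 b a c hab.symm hc.mem_segment).elim hbc.ne' hac.ne'
  · exact (hp.2.1 c b a hbc.symm ha.mem_segment).elim hac.ne hab.ne

end IsPlanarEmbedding

theorem IsTriangulation.adj_of_sees (hG : IsTriangulation G) (hp : IsPlanarEmbedding G p)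
    {u v : Fin n} (huv : u ≠ v) (hsees : Sees G p u v) : G.Adj u v := by
  by_contra h
  exact hG.2 u v huv h ⟨p, hp.sup_edge hsees⟩

end Drawing

section Climbing

variable {n : ℕ} {G : SimpleGraph (Fin n)} {p : Fin n → Plane}

theorem IsTriangulation.exists_adj_lt_of_segment_inter_subset (hG : IsTriangulation G)
    (hp : IsPlanarEmbedding G p) (φ : Plane →ᵃ[ℝ] ℝ) {z w : Fin n} (hzw : φ (p z) < φ (p w))
    (hclear : segment ℝ (p z) (p w) ∩ drawing G p {z}ᶜ ⊆ {p w}) :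
    ∃ v, G.Adj z v ∧ φ (p z) < φ (p v) := by
  by_contra! htop
  have eq_of_mem_edge : ∀ v, z = v ∨ G.Adj z v → ∀ m ∈ segment ℝ (p z) (p w),
      m ∈ segment ℝ (p z) (p v) → m = p z := by
    intro v hv m hm hmv
    have hvz : φ (p v) ≤ φ (p z) := hv.elim (· ▸ le_rfl) (htop v)
    have hmz : φ m ≤ φ (p z) := (map_mem_uIcc_of_mem_segment φ hmv).2.trans (max_le le_rfl hvz)
    exact eq_left_of_mem_segment φ hm hmz (hmz.trans_lt hzw)
  have hsees : Sees G p z w := by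
    rintro m ⟨hm, g, -, h, -, hgh, hmgh⟩
    by_cases hgz : g = z
    · subst hgz
      exact .inl (eq_of_mem_edge h hgh m hm hmgh)
    by_cases hhz : h = z
    · subst hhz
      exact .inl (eq_of_mem_edge g (hgh.imp Eq.symm .symm) m hm (segment_symm ℝ (p g) _ ▸ hmgh))
    · exact .inr (hclear ⟨hm, g, hgz, h, hhz, hgh, hmgh⟩)
  exact (htop w (hG.adj_of_sees hp (ne_of_apply_ne (φ ∘ p) hzw.ne) hsees)).not_gt hzw

/-- In the drawing `p` of `G`, an observer at the vertex `z` sees the inner point `q` of the edge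
`xy`. -/
structure SeesEdgeAt (G : SimpleGraph (Fin n)) (p : Fin n → Plane) (z x y : Fin n) (q : Plane) :
    Prop where
  adj : G.Adj x y
  left_ne : x ≠ z
  right_ne : y ≠ z
  mem_edge : q ∈ segment ℝ (p x) (p y)
  ne_vertex : ∀ w, p w ≠ q
  clear : segment ℝ (p z) q ∩ drawing G p {z}ᶜ ⊆ {q}

theorem exists_clear_vertex_or_seesEdgeAt (hp : IsPlanarEmbedding G p) (φ : Plane →ᵃ[ℝ] ℝ)
    {z w : Fin n} (hzw : φ (p z) < φ (p w)) :
    (∃ v, φ (p z) < φ (p v) ∧ segment ℝ (p z) (p v) ∩ drawing G p {z}ᶜ ⊆ {p v}) ∨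
      ∃ r ∈ segment ℝ (p z) (p w), φ (p z) < φ r ∧ ∃ x y, SeesEdgeAt G p z x y r := by
  have hwz : w ≠ z := ne_of_apply_ne (φ ∘ p) hzw.ne'
  obtain ⟨r, hr, hr_mem, hclear⟩ := exists_first_mem_segment (isClosed_drawing G p {z}ᶜ)
    (z := p z) (mem_drawing hwz)
  have hzr : φ (p z) < φ r := by
    by_contra! hle
    obtain rfl := eq_left_of_mem_segment φ hr hle (hle.trans_lt hzw)
    exact hp.mem_of_mem_drawing hr_mem rfl
  by_cases hvertex : ∃ v, p v = r
  · obtain ⟨v, rfl⟩ := hvertex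
    exact .inl ⟨v, hzr, hclear⟩
  · rw [not_exists] at hvertex
    obtain ⟨x, hx, y, hy, rfl | hxy, hrxy⟩ := hr_mem
    · rw [segment_same, Set.mem_singleton_iff] at hrxy
      exact absurd hrxy.symm (hvertex x)
    · exact .inr ⟨r, hr, hzr, x, y, hxy, hx, hy, hrxy, hvertex, hclear⟩

namespace SeesEdgeAt

variable {z x y : Fin n} {q : Plane}

theorem symm (h : SeesEdgeAt G p z x y q) : SeesEdgeAt G p z y x q :=
  ⟨h.adj.symm, h.right_ne, h.left_ne, segment_symm ℝ (p x) _ ▸ h.mem_edge, h.ne_vertex, h.clear⟩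

theorem not_mem_segment (h : SeesEdgeAt G p z x y q) {w : Fin n} (hw : w ≠ z) :
    p w ∉ segment ℝ (p z) q :=
  fun hmem ↦ h.ne_vertex w (h.clear ⟨hmem, mem_drawing hw⟩)

theorem not_collinear (h : SeesEdgeAt G p z x y q) (hp : IsPlanarEmbedding G p) :
    ¬ Collinear ℝ {p z, q, p y} := by
  intro hcol
  have hx : p x ∈ line[ℝ, p y, q] :=
    Sbtw.left_mem_affineSpan ⟨mem_segment_iff_wbtw.1 h.mem_edge, (h.ne_vertex x).symm,
      (h.ne_vertex y).symm⟩
  have hxyz : Collinear ℝ {p x, p y, p z} :=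
    ((collinear_insert_iff_of_mem_affineSpan (affineSpan_mono ℝ (by grind) hx)).2 hcol).subset
      (by grind)
  rcases segment_trichotomy_of_collinear hxyz h.mem_edge with hz | hx | hy
  · exact (hp.2.1 x y z h.adj hz).elim h.left_ne.symm h.right_ne.symm
  · exact h.not_mem_segment h.left_ne hx
  · exact h.not_mem_segment h.right_ne hy

variable {B : AffineBasis (Fin 3) ℝ Plane}

theorem mem_edge_of_coord_eq_zero (h : SeesEdgeAt G p z x y (B 1)) (hz : p z = B 0)
    (hy : p y = B 2) {m : Plane} (hm : m ∈ drawing G p {z}ᶜ) (hm₁ : 0 ≤ B.coord 1 m)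
    (hm₀₂ : (B.coord 0 m = 0 ∧ 0 ≤ B.coord 2 m) ∨ (B.coord 2 m = 0 ∧ 0 ≤ B.coord 0 m)) :
    m ∈ segment ℝ (p x) (p y) ∧ B.coord 0 m = 0 ∧ 0 ≤ B.coord 2 m := by
  rcases hm₀₂ with ⟨hm₀, hm₂⟩ | ⟨hm₂, hm₀⟩
  · have hmem : m ∈ segment ℝ (B 1) (p y) := by
      rw [hy]
      exact mem_segment_of_coord_eq_zero_s15 B (by decide) hm₁ hm₂ fun k hk ↦ by
        obtain rfl : k = 0 := by omega
        exact hm₀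
    exact ⟨(convex_segment _ _).segment_subset h.mem_edge (right_mem_segment ℝ _ _) hmem, hm₀, hm₂⟩
  · have hmem : m ∈ segment ℝ (p z) (B 1) := by
      rw [hz]
      exact mem_segment_of_coord_eq_zero_s15 B (by decide) hm₀ hm₁ fun k hk ↦ by
        obtain rfl : k = 2 := by omega
        exact hm₂
    obtain rfl : m = B 1 := h.clear ⟨hmem, hm⟩
    exact ⟨h.mem_edge, by simp [B.coord_apply], hm₂.ge⟩

theorem coord_zero_eq_zero (h : SeesEdgeAt G p z x y (B 1)) (hy : p y = B 2) {m : Plane}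
    (hm : m ∈ segment ℝ (p x) (p y)) : B.coord 0 m = 0 := by
  have hy₀ : B.coord 0 (p y) = 0 := by simp [hy, B.coord_apply]
  have hx₀ : B.coord 0 (p x) = 0 := by
    obtain ⟨s, t, -, -, hst, hq⟩ := h.mem_edge
    have hs : s ≠ 0 := by
      rintro rfl
      refine h.ne_vertex y ?_
      rw [← hq, zero_smul, zero_add, (zero_add t).symm.trans hst, one_smul]
    have hq₀ : B.coord 0 (s • p x + t • p y) = 0 := by simp [hq, B.coord_apply]
    rw [Convex.combo_affine_apply hst, hy₀, smul_zero, add_zero] at hq₀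
    exact (smul_eq_zero_iff_right hs).1 hq₀
  simpa [hx₀, hy₀] using map_mem_uIcc_of_mem_segment (B.coord 0) hm

/- The ratio of the coordinates `1` and `2` of a point decreases with its angle from the ray `zq`.
The inequality compares ratios without dividing. -/
theorem exists_extremal_vertex (h : SeesEdgeAt G p z x y (B 1)) (hz : p z = B 0)
    (hy : p y = B 2) :
    ∃ w, 0 ≤ B.coord 0 (p w) ∧ 0 ≤ B.coord 1 (p w) ∧ 0 < B.coord 2 (p w) ∧
      ∀ v ≠ z, 0 ≤ B.coord 0 (p v) → 0 ≤ B.coord 2 (p v) →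
        B.coord 2 (p w) * B.coord 1 (p v) ≤ B.coord 1 (p w) * B.coord 2 (p v) := by
  let S : Set (Fin n) := {w | 0 ≤ B.coord 0 (p w) ∧ 0 ≤ B.coord 1 (p w) ∧ 0 < B.coord 2 (p w)}
  have hyS : y ∈ S := by simp [S, hy, B.coord_apply]
  obtain ⟨w, ⟨hw₀, hw₁, hw₂⟩, hmax⟩ := Set.exists_max_image S
    (fun w ↦ B.coord 1 (p w) / B.coord 2 (p w)) S.toFinite ⟨y, hyS⟩
  refine ⟨w, hw₀, hw₁, hw₂, fun v hvz hv₀ hv₂ ↦ ?_⟩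
  rcases le_or_gt (B.coord 1 (p v)) 0 with hv₁ | hv₁
  · exact (mul_nonpos_of_nonneg_of_nonpos hw₂.le hv₁).trans (mul_nonneg hw₁ hv₂)
  have hv₂' : B.coord 2 (p v) ≠ 0 := by
    intro hv₂'
    refine h.not_mem_segment hvz (hz ▸ mem_segment_of_coord_eq_zero_s15 B (by decide) hv₀ hv₁.le ?_)
    intro k hk
    obtain rfl : k = 2 := by omega
    exact hv₂'
  have hv₂ : 0 < B.coord 2 (p v) := hv₂.lt_of_ne' hv₂'
  have := hmax v ⟨hv₀, hv₁.le, hv₂⟩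
  rwa [div_le_div_iff₀ hv₂ hw₂, mul_comm] at this

/- If the endpoint `g` were closer in angle to the ray `zq` than `m`, it would lie outside the
triangle `z q y`, and the edge `gk` would leave the triangle through `zq` or `xy`. -/
theorem coord_mul_le_of_mem_edge (h : SeesEdgeAt G p z x y (B 1)) (hp : IsPlanarEmbedding G p)
    (hz : p z = B 0) (hy : p y = B 2) {β γ : ℝ} (hβ : 0 ≤ β) (hγ : 0 < γ)
    (hmax : ∀ v ≠ z, 0 ≤ B.coord 0 (p v) → 0 ≤ B.coord 2 (p v) →
      γ * B.coord 1 (p v) ≤ β * B.coord 2 (p v))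
    {g k : Fin n} (hgk : G.Adj g k) (hg : g ≠ z) (hk : k ≠ z) {m : Plane}
    (hm : m ∈ segment ℝ (p g) (p k)) (hm₀ : 0 < B.coord 0 m) (hm₂ : 0 < B.coord 2 m)
    (hm₁ : γ * B.coord 1 m = β * B.coord 2 m) :
    γ * B.coord 1 (p g) ≤ β * B.coord 2 (p g) := by
  obtain ⟨c, hc⟩ : ∃ c : Plane →ᵃ[ℝ] ℝ, ∀ r, c r = γ * B.coord 1 r - β * B.coord 2 r :=
    ⟨γ • B.coord 1 - β • B.coord 2, fun _ ↦ rfl⟩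
  by_contra! hcg
  obtain ⟨m', hm', hexit⟩ := exists_mem_segment_eq_zero
    (B.coord 0).continuous_of_finiteDimensional (B.coord 2).continuous_of_finiteDimensional
    hm₀ hm₂ fun hg₀₂ ↦ hcg.not_ge (hmax g hg hg₀₂.1 hg₀₂.2)
  have hcm' : β * B.coord 2 m' < γ * B.coord 1 m' := by
    by_contra! hle
    obtain rfl : m' = m := eq_left_of_mem_segment c hm'
      (by linarith [hc m, hc m']) (by linarith [hc m', hc (p g)])
    exact hexit.elim (hm₀.ne' ·.1) (hm₂.ne' ·.1)
  have hm'₁ : 0 ≤ B.coord 1 m' := by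
    have hm'₂ : 0 ≤ B.coord 2 m' := hexit.elim (·.2) (·.1.ge)
    exact (pos_of_mul_pos_right ((mul_nonneg hβ hm'₂).trans_lt hcm') hγ.le).le
  have hm'gk : m' ∈ segment ℝ (p g) (p k) :=
    (convex_segment _ _).segment_subset hm (left_mem_segment ℝ _ _) hm'
  obtain ⟨hm'xy, hm'₀, hm'₂⟩ :=
    h.mem_edge_of_coord_eq_zero hz hy ⟨g, hg, k, hk, .inr hgk, hm'gk⟩ hm'₁ hexit
  have hne : ({x, y} : Set (Fin n)) ≠ {g, k} := by
    intro heq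
    have hmxy : m ∈ segment ℝ (p x) (p y) := by
      rwa [← convexHull_pair, ← Set.image_pair, heq, Set.image_pair, convexHull_pair]
    exact hm₀.ne' (h.coord_zero_eq_zero hy hmxy)
  obtain ⟨v, ⟨-, hv⟩, rfl⟩ := hp.2.2 x y g k h.adj hgk hne ⟨hm'xy, hm'gk⟩
  exact hcm'.not_ge (hmax v (by grind) hm'₀.ge hm'₂)

theorem not_seesEdgeAt_of_extremal (h : SeesEdgeAt G p z x y (B 1)) (hp : IsPlanarEmbedding G p)
    (hz : p z = B 0) (hy : p y = B 2) {w : Fin n} (hw₀ : 0 ≤ B.coord 0 (p w))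
    (hw₁ : 0 ≤ B.coord 1 (p w)) (hw₂ : 0 < B.coord 2 (p w))
    (hmax : ∀ v ≠ z, 0 ≤ B.coord 0 (p v) → 0 ≤ B.coord 2 (p v) →
      B.coord 2 (p w) * B.coord 1 (p v) ≤ B.coord 1 (p w) * B.coord 2 (p v))
    {g k : Fin n} {r : Plane} (hr : r ∈ segment ℝ (p z) (p w)) : ¬ SeesEdgeAt G p z g k r := by
  intro hgk
  obtain ⟨c, hc⟩ : ∃ c : Plane →ᵃ[ℝ] ℝ,
      ∀ m, c m = B.coord 1 (p w) * B.coord 2 m - B.coord 2 (p w) * B.coord 1 m :=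
    ⟨B.coord 1 (p w) • B.coord 2 - B.coord 2 (p w) • B.coord 1, fun _ ↦ rfl⟩
  have hz₀ : 0 < B.coord 0 (p z) := by simp [hz, B.coord_apply]
  have hz₁ : B.coord 1 (p z) = 0 := by simp [hz, B.coord_apply]
  have hz₂ : B.coord 2 (p z) = 0 := by simp [hz, B.coord_apply]
  have hr₂ : 0 < B.coord 2 r := by
    by_contra! hle
    exact hgk.ne_vertex z
      (eq_left_of_mem_segment (B.coord 2) hr (hz₂ ▸ hle) (hle.trans_lt hw₂)).symm
  have hr₀ : 0 < B.coord 0 r := by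
    by_contra! hle
    exact hgk.ne_vertex w (eq_left_of_mem_segment (B.coord 0) (segment_symm ℝ (p z) _ ▸ hr)
      (hle.trans hw₀) (hle.trans_lt hz₀)).symm
  have hcr : c r = 0 := by
    simpa [hc, hz₁, hz₂, mul_comm] using map_mem_uIcc_of_mem_segment c hr
  have hr₁ : B.coord 2 (p w) * B.coord 1 r = B.coord 1 (p w) * B.coord 2 r :=
    (sub_eq_zero.1 (hc r ▸ hcr)).symm
  have hck : c (p k) = 0 := by
    have hg := h.coord_mul_le_of_mem_edge hp hz hy hw₁ hw₂ hmax hgk.adj hgk.left_ne hgk.right_ne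
      hgk.mem_edge hr₀ hr₂ hr₁
    have hk := h.coord_mul_le_of_mem_edge hp hz hy hw₁ hw₂ hmax hgk.symm.adj hgk.right_ne
      hgk.left_ne hgk.symm.mem_edge hr₀ hr₂ hr₁
    have hcg : 0 ≤ c (p g) := hc _ ▸ sub_nonneg.2 hg
    have hck : 0 ≤ c (p k) := hc _ ▸ sub_nonneg.2 hk
    by_contra hne
    exact hgk.ne_vertex g (eq_left_of_mem_segment c hgk.mem_edge (hcr.trans_le hcg)
      (hcr.trans_lt (hck.lt_of_ne' hne))).symm
  refine hgk.not_collinear hp (collinear_triple_of_mem_affineSpan_pair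
    (left_mem_affineSpan_pair ℝ (p z) (p w)) (mem_segment_iff_wbtw.1 hr).mem_affineSpan ?_)
  rw [hz]
  exact mem_line_of_coord_mul_eq B hw₂.ne' (by linarith [hc (p k)])

theorem exists_clear_vertex (h : SeesEdgeAt G p z x y q) (hp : IsPlanarEmbedding G p)
    {φ : Plane →ᵃ[ℝ] ℝ} (hq : φ (p z) < φ q) (hzy : φ (p z) < φ (p y)) :
    ∃ w, φ (p z) < φ (p w) ∧ segment ℝ (p z) (p w) ∩ drawing G p {z}ᶜ ⊆ {p w} := by
  obtain ⟨B, hB⟩ := Plane.exists_affineBasis (h.not_collinear hp)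
  obtain ⟨hz, rfl, hy⟩ : p z = B 0 ∧ q = B 1 ∧ p y = B 2 := by simp [hB]
  obtain ⟨w, hw₀, hw₁, hw₂, hmax⟩ := h.exists_extremal_vertex hz hy
  have hzw : φ (p z) < φ (p w) := by
    have hφ := sum_coord_mul_apply B φ (p w)
    have hsum := B.sum_coord_apply_eq_one (p w)
    rw [Fin.sum_univ_three] at hφ hsum
    rw [hz] at hq hzy ⊢
    rw [hy] at hzy
    rw [← hφ, show B.coord 0 (p w) = 1 - B.coord 1 (p w) - B.coord 2 (p w) by linarith]
    linarith [mul_nonneg hw₁ (sub_nonneg.2 hq.le), mul_pos hw₂ (sub_pos.2 hzy)]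
  refine (exists_clear_vertex_or_seesEdgeAt hp φ hzw).resolve_right ?_
  rintro ⟨r, hr, -, g, k, hgk⟩
  exact h.not_seesEdgeAt_of_extremal hp hz hy hw₀ hw₁ hw₂ hmax hr hgk

end SeesEdgeAt

theorem IsTriangulation.exists_adj_lt (hG : IsTriangulation G) (hp : IsPlanarEmbedding G p)
    (φ : Plane →ᵃ[ℝ] ℝ) {z w : Fin n} (hzw : φ (p z) < φ (p w)) :
    ∃ v, G.Adj z v ∧ φ (p z) < φ (p v) := by
  suffices ∃ v, φ (p z) < φ (p v) ∧ segment ℝ (p z) (p v) ∩ drawing G p {z}ᶜ ⊆ {p v} by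
    obtain ⟨v, hzv, hclear⟩ := this
    exact hG.exists_adj_lt_of_segment_inter_subset hp φ hzv hclear
  rcases exists_clear_vertex_or_seesEdgeAt hp φ hzw with hv | ⟨r, -, hzr, x, y, hxy⟩
  · exact hv
  rcases lt_max_iff.1 (hzr.trans_le (map_mem_uIcc_of_mem_segment φ hxy.mem_edge).2) with hx | hy
  · exact hxy.symm.exists_clear_vertex hp hzr hx
  · exact hxy.exists_clear_vertex hp hzr hy

end Climbing

section Sides

/-- A union of sides of the vertex cut `T`: `I` is nonempty, misses `T`, and no edge leads from `I`
to a vertex outside `I ∪ T`. -/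
structure IsSide {V : Type*} (G : SimpleGraph V) (T I : Set V) : Prop where
  nonempty : I.Nonempty
  disjoint : Disjoint I T
  closed : ∀ x ∈ I, ∀ y, G.Adj x y → y ∈ I ∨ y ∈ T

namespace IsSide

variable {V : Type*} {G : SimpleGraph V} {T I : Set V}

theorem compl (h : IsSide G T I) (hne : (I ∪ T)ᶜ.Nonempty) : IsSide G T (I ∪ T)ᶜ where
  nonempty := hne
  disjoint := Set.disjoint_left.2 fun _ hx hxT ↦ hx (.inr hxT)
  closed x hx y hxy := by
    by_contra! hy
    rcases not_not.1 hy.1 with hyI | hyT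
    · exact hx (h.closed y hyI x hxy.symm)
    · exact hy.2 hyT

theorem of_insert {v : V} (h : IsSide G (insert v T) I) (hv : ∀ u ∈ I, ¬ G.Adj v u) :
    IsSide G T I where
  nonempty := h.nonempty
  disjoint := h.disjoint.mono_right (Set.subset_insert v T)
  closed x hx y hxy := by
    rcases h.closed x hx y hxy with hy | rfl | hy
    · exact .inl hy
    · exact absurd hxy.symm (hv x hx)
    · exact .inr hy

theorem exists_of_not_connected {d : V} (hd : d ∉ T)
    (h : ¬ (G.induce {v | v ∉ T}).Connected) : ∃ K, IsSide G T K ∧ d ∉ K := by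
  refine ⟨{t | ∃ ht : t ∉ T, ¬ (G.induce {v | v ∉ T}).Reachable ⟨d, hd⟩ ⟨t, ht⟩},
    ⟨?_, Set.disjoint_left.2 fun t ht ↦ ht.1, ?_⟩, fun hdK ↦ hdK.2 .rfl⟩
  · by_contra hempty
    refine h ((SimpleGraph.connected_iff_exists_forall_reachable _).2 ⟨⟨d, hd⟩, fun t ↦ ?_⟩)
    by_contra ht
    exact hempty ⟨t, t.2, ht⟩
  · rintro x ⟨hx, hdx⟩ y hxy
    refine or_iff_not_imp_right.2 fun hy ↦ ⟨hy, fun hdy ↦ hdx (hdy.trans ?_)⟩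
    exact SimpleGraph.Adj.reachable (SimpleGraph.induce_adj.2 hxy.symm)

end IsSide

end Sides

section Separation

variable {n : ℕ} {G : SimpleGraph (Fin n)} {p : Fin n → Plane} {T K : Set (Fin n)} {z w : Fin n}

theorem IsPlanarEmbedding.halfShear_comp (hp : IsPlanarEmbedding G p) (hK : IsSide G T K)
    {f : Plane →ᵃ[ℝ] ℝ} (hneg : ∀ u, u ∈ K ↔ f (p u) < 0) (hT : ∀ d ∈ T, f (p d) = 0) {a : Plane}
    (ha : f.linear a = 0) : IsPlanarEmbedding G (halfShear f a ∘ p) := by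
  have hside : ∀ u w, G.Adj u w → f (p u) < 0 → f (p w) ≤ 0 := by
    intro u w huw hu
    rcases hK.closed u ((hneg u).2 hu) w huw with hw | hw
    · exact ((hneg w).1 hw).le
    · exact (hT w hw).le
  refine hp.comp (halfShear_injective ha) fun u w huw ↦ segment_halfShear_subset f a ?_
  rcases lt_or_ge (f (p u)) 0 with hu | hu
  · exact .inr ⟨hu.le, hside u w huw hu⟩
  rcases lt_or_ge (f (p w)) 0 with hw | hw
  · exact .inr ⟨hside w u huw.symm hw, hw.le⟩
  · exact .inl ⟨hu, hw⟩

namespace IsTriangulation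

theorem exists_max_mem_side (hG : IsTriangulation G) (hp : IsPlanarEmbedding G p)
    (hK : IsSide G T K) (φ : Plane →ᵃ[ℝ] ℝ) (hz : z ∈ K) (hTz : ∀ d ∈ T, φ (p d) < φ (p z)) :
    ∃ t ∈ K, ∀ w, φ (p w) ≤ φ (p t) := by
  obtain ⟨t, ht, hmax⟩ := Set.exists_max_image K (φ ∘ p) K.toFinite ⟨z, hz⟩
  refine ⟨t, ht, fun w ↦ ?_⟩
  by_contra! hw
  obtain ⟨v, htv, hv⟩ := hG.exists_adj_lt hp φ hw
  rcases hK.closed t ht v htv with hvK | hvT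
  · exact hv.not_ge (hmax v hvK)
  · exact hv.not_gt ((hTz v hvT).trans_le (hmax z hz))

theorem mem_side_of_lt (hG : IsTriangulation G) (hp : IsPlanarEmbedding G p)
    (hK : IsSide G T K) (φ : Plane →ᵃ[ℝ] ℝ) (hz : z ∈ K) (hTz : ∀ d ∈ T, φ (p d) < φ (p z))
    (hTw : ∀ d ∈ T, φ (p d) < φ (p w)) : w ∈ K := by
  obtain ⟨ψ, hψ, hlt⟩ := exists_affineMap_injective_comp hp.1 φ
  by_contra hw
  have hwL : w ∈ (K ∪ T)ᶜ := not_or_intro hw fun hwT ↦ (hTw w hwT).false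
  obtain ⟨t, ht, htmax⟩ := hG.exists_max_mem_side hp hK ψ hz fun d hd ↦ hlt d z (hTz d hd)
  obtain ⟨t', ht', htmax'⟩ := hG.exists_max_mem_side hp (hK.compl ⟨w, hwL⟩) ψ hwL
    fun d hd ↦ hlt d w (hTw d hd)
  obtain rfl : t = t' := hψ ((htmax' t).antisymm (htmax t'))
  exact ht' (.inl ht)

theorem segment_inter_convexHull_nonempty (hG : IsTriangulation G) (hp : IsPlanarEmbedding G p)
    (hK : IsSide G T K) (hz : z ∈ K) (hw : w ∉ K) :
    (segment ℝ (p z) (p w) ∩ convexHull ℝ (p '' T)).Nonempty := by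
  by_contra hdisj
  obtain ⟨f, a, b, hT, hab, hzw⟩ := geometric_hahn_banach_compact_closed
    (convex_convexHull ℝ (p '' T)) ((T.toFinite.image p).isCompact_convexHull ℝ)
    (convex_segment (p z) (p w)) (isCompact_segment _ _).isClosed
    (Set.disjoint_iff_inter_eq_empty.2 (Set.inter_comm _ _ ▸ Set.not_nonempty_iff_eq_empty.1 hdisj))
  have lt_of_mem_segment : ∀ m ∈ segment ℝ (p z) (p w), ∀ d ∈ T, f (p d) < f m := fun m hm d hd ↦
    (hT _ (subset_convexHull ℝ _ ⟨d, hd, rfl⟩)).trans (hab.trans (hzw m hm))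
  exact hw (hG.mem_side_of_lt hp hK f.toLinearMap.toAffineMap hz
    (lt_of_mem_segment _ (left_mem_segment ℝ _ _)) (lt_of_mem_segment _ (right_mem_segment ℝ _ _)))

theorem mem_side_iff_neg (hG : IsTriangulation G) (hp : IsPlanarEmbedding G p)
    {d e v : Fin n} (hde : G.Adj d e) (hK : IsSide G {d, e} K) (hvK : v ∉ K) {f : Plane →ᵃ[ℝ] ℝ}
    (hd : f (p d) = 0) (he : f (p e) = 0) (hv : 0 < f (p v)) {u : Fin n} :
    u ∈ K ↔ f (p u) < 0 := by
  have not_mem_edge : ∀ x ∈ K, p x ∉ segment ℝ (p d) (p e) := fun x hx hmem ↦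
    Set.disjoint_left.1 hK.disjoint hx (hp.2.1 d e x hde hmem)
  have hinter : ∀ x ∈ K, ∀ y ∉ K, (segment ℝ (p y) (p x) ∩ segment ℝ (p d) (p e)).Nonempty := by
    intro x hx y hy
    have h := hG.segment_inter_convexHull_nonempty hp hK hx hy
    rwa [Set.image_pair, convexHull_pair, segment_symm] at h
  have hneg : ∀ x ∈ K, f (p x) < 0 := fun x hx ↦
    neg_of_segment_inter_nonempty f hd he (hinter x hx v hvK) hv (not_mem_edge x hx)
  refine ⟨hneg u, fun hu ↦ ?_⟩
  obtain ⟨x, hx⟩ := hK.nonempty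
  by_contra huK
  exact (hneg x hx).not_gt (neg_lt_zero.1 (neg_of_segment_inter_nonempty (-f) (neg_eq_zero.2 hd)
    (neg_eq_zero.2 he) (hinter x hx u huK) (neg_pos.2 hu) (not_mem_edge x hx)))

theorem not_isSide_pair (hG : IsTriangulation G) {d e v : Fin n} (hde : G.Adj d e)
    (hev : G.Adj e v) (hdv : G.Adj d v) (hv : v ∉ K) : ¬ IsSide G {d, e} K := by
  intro hK
  obtain ⟨p, hp⟩ := hG.1
  obtain ⟨B, hB⟩ := Plane.exists_affineBasis (hp.not_collinear hde hev hdv)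
  obtain ⟨hBd, hBe, hBv⟩ : p d = B 0 ∧ p e = B 1 ∧ p v = B 2 := by simp [hB]
  have hd : B.coord 2 (p d) = 0 := by simp [hBd, B.coord_apply]
  have he : B.coord 2 (p e) = 0 := by simp [hBe, B.coord_apply]
  have hv₂ : B.coord 2 (p v) = 1 := by simp [hBv, B.coord_apply]
  have hneg : ∀ u, u ∈ K ↔ B.coord 2 (p u) < 0 := fun u ↦
    hG.mem_side_iff_neg hp hde hK hv hd he (hv₂ ▸ one_pos)
  obtain ⟨x, hx⟩ := hK.nonempty
  have hx₂ := (hneg x).1 hx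
  obtain ⟨h, hhd, hhe, hhx⟩ : ∃ h : Plane →ᵃ[ℝ] ℝ, h (p d) = 0 ∧ h (p e) = 1 ∧ h (p x) = 2 := by
    refine ⟨B.coord 1 + ((2 - B.coord 1 (p x)) / B.coord 2 (p x)) • B.coord 2, ?_, ?_, ?_⟩
    · simp [hBd]
    · simp [hBe]
    · simp [hx₂.ne]
  let a : Plane := (2 - h (p v)) • (p e - p d)
  have ha : (B.coord 2).linear a = 0 := by rw [linear_smul_sub, hd, he, sub_self, mul_zero]
  have hp' : IsPlanarEmbedding G (halfShear (B.coord 2) a ∘ p) :=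
    hp.halfShear_comp hK hneg (by simp [hd, he]) ha
  have hh_le : ∀ t ∈ ({d, e} : Set (Fin n)), h (halfShear (B.coord 2) a (p t)) ≤ 1 := by
    simp [halfShear, hd, he, hhd, hhe]
  have hh_x : h (halfShear (B.coord 2) a (p x)) = 2 := by simp [halfShear, hx₂.le, hhx]
  have hh_v : h (halfShear (B.coord 2) a (p v)) = 2 := by
    rw [halfShear, hv₂, max_eq_left zero_le_one, one_smul, add_comm, ← vadd_eq_add, h.map_vadd,
      linear_smul_sub, hhd, hhe, vadd_eq_add]
    ring
  exact hv (hG.mem_side_of_lt hp' hK h hx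
    (fun t ht ↦ (hh_le t ht).trans_lt (hh_x ▸ one_lt_two))
    (fun t ht ↦ (hh_le t ht).trans_lt (hh_v ▸ one_lt_two)))

end IsTriangulation

end Separation

section FreeEdge

variable {n : ℕ} {G : SimpleGraph (Fin n)} {I K : Set (Fin n)} {v d e u w : Fin n}

/-- The edge `vu` of `G` lies on no separating triangle. -/
def IsFreeEdge (G : SimpleGraph (Fin n)) (v u : Fin n) : Prop :=
  G.Adj v u ∧ ¬ ∃ x y z : Fin n, IsSepTriangle G x y z ∧
    s(v, u) ∈ ({s(x, y), s(y, z), s(x, z)} : Set (Sym2 (Fin n)))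

theorem exists_isSepTriangle_of_not_isFreeEdge (hvu : G.Adj v u) (h : ¬ IsFreeEdge G v u) :
    ∃ w, IsSepTriangle G v u w := by
  obtain ⟨x, y, z, ⟨hxy, hyz, hxz, hsep⟩, hmem⟩ := not_and_not_right.1 h hvu
  have isSepTriangle : ∀ w, G.Adj v w → G.Adj u w → ({x, y, z} : Set (Fin n)) = {v, u, w} →
      IsSepTriangle G v u w := fun w hvw huw hxyz ↦ ⟨hvu, huw, hvw, hxyz ▸ hsep⟩
  simp only [Set.mem_insert_iff, Set.mem_singleton_iff, Sym2.eq_iff] at hmem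
  rcases hmem with (⟨rfl, rfl⟩ | ⟨rfl, rfl⟩) | (⟨rfl, rfl⟩ | ⟨rfl, rfl⟩) | (⟨rfl, rfl⟩ | ⟨rfl, rfl⟩)
  · exact ⟨z, isSepTriangle z hxz hyz rfl⟩
  · exact ⟨z, isSepTriangle z hyz hxz (by grind)⟩
  · exact ⟨x, isSepTriangle x hxy.symm hxz.symm (by grind)⟩
  · exact ⟨x, isSepTriangle x hxz.symm hxy.symm (by grind)⟩
  · exact ⟨y, isSepTriangle y hxy hyz.symm (by grind)⟩
  · exact ⟨y, isSepTriangle y hyz.symm hxy (by grind)⟩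

namespace IsTriangulation

theorem exists_adj_mem_side (hG : IsTriangulation G) (hvd : G.Adj v d) (hve : G.Adj v e)
    (hde : G.Adj d e) (hI : IsSide G {v, d, e} I) : ∃ u ∈ I, G.Adj v u := by
  by_contra! h
  exact hG.not_isSide_pair hde hve.symm hvd.symm
    (fun hv ↦ Set.disjoint_left.1 hI.disjoint hv (Set.mem_insert v _)) (hI.of_insert h)

theorem exists_ssubset_side (hG : IsTriangulation G) (hvd : G.Adj v d) (hve : G.Adj v e)
    (hde : G.Adj d e) (hI : IsSide G {v, d, e} I) (hu : u ∈ I) (hsep : IsSepTriangle G v u w)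
    (hwd : w ≠ d) : ∃ K ⊂ I, IsSide G {v, u, w} K := by
  have hI_vde := Set.disjoint_left.1 hI.disjoint
  have hd : d ∉ ({v, u, w} : Set (Fin n)) := by
    rintro (rfl | rfl | rfl)
    exacts [hvd.ne rfl, hI_vde hu (by simp), hwd rfl]
  obtain ⟨K, hK, hdK⟩ := IsSide.exists_of_not_connected hd hsep.2.2.2
  have hK_vuw := Set.disjoint_left.1 hK.disjoint
  have not_adj_d : ∀ x ∈ K, ¬ G.Adj x d := fun x hx hxd ↦ (hK.closed x hx d hxd).elim hdK hd
  have hK_vde : Disjoint K {v, d, e} := by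
    refine Set.disjoint_left.2 fun x hx ↦ ?_
    rintro (rfl | rfl | rfl)
    exacts [hK_vuw hx (by simp), hdK hx, not_adj_d x hx hde.symm]
  have hKI : K ⊆ I := by
    by_contra hsub
    have hM : IsSide G {d, v, e} (K \ I) := by
      rw [Set.insert_comm]
      refine ⟨Set.sdiff_nonempty.2 hsub, hK_vde.mono_left Set.sdiff_subset, fun x hx y hxy ↦ ?_⟩
      by_cases hyI : y ∈ I
      · rcases hI.closed y hyI x hxy.symm with hxI | hx_vde
        · exact absurd hxI hx.2
        · exact absurd hx_vde (Set.disjoint_left.1 hK_vde hx.1)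
      rcases hK.closed x hx.1 y hxy with hyK | rfl | rfl | rfl
      · exact .inl ⟨hyK, hyI⟩
      · exact .inr (by simp)
      · exact absurd hu hyI
      · exact .inr ((hI.closed u hu y hsep.2.1).resolve_left hyI)
    obtain ⟨m, hm, hdm⟩ := hG.exists_adj_mem_side hvd.symm hde hve hM
    exact not_adj_d m hm.1 hdm.symm
  exact ⟨K, ⟨hKI, fun hIK ↦ hK_vuw (hIK hu) (by simp)⟩, hK⟩

theorem exists_isFreeEdge (hG : IsTriangulation G) (hvd : G.Adj v d) (hve : G.Adj v e)
    (hde : G.Adj d e) (hI : IsSide G {v, d, e} I) : ∃ u ∈ I, IsFreeEdge G v u := by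
  induction I using WellFoundedLT.induction generalizing d e with
  | ind I ih =>
    obtain ⟨u, hu, hvu⟩ := hG.exists_adj_mem_side hvd hve hde hI
    by_cases hfree : IsFreeEdge G v u
    · exact ⟨u, hu, hfree⟩
    obtain ⟨w, hvuw⟩ := exists_isSepTriangle_of_not_isFreeEdge hvu hfree
    obtain ⟨K, hKI, hK⟩ : ∃ K ⊂ I, IsSide G {v, u, w} K := by
      by_cases hwd : w = d
      · exact hG.exists_ssubset_side hve hvd hde.symm (Set.pair_comm d e ▸ hI) hu hvuw
          (hwd ▸ hde.ne)
      · exact hG.exists_ssubset_side hvd hve hde hI hu hvuw hwd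
    obtain ⟨u', hu', hfree'⟩ := ih K hKI hvu hvuw.2.2.1 hvuw.2.1 hK
    exact ⟨u', hKI.1 hu', hfree'⟩

end IsTriangulation

end FreeEdge

theorem sepTriangle_free_edge_inside_general {n : ℕ} {G : SimpleGraph (Fin n)}
    (hG : IsTriangulation G) {a b c : Fin n} (hab : G.Adj a b) (hbc : G.Adj b c) (hac : G.Adj a c)
    {I : Set (Fin n)} (hI : IsSide G {a, b, c} I) :
    ∀ v ∈ ({a, b, c} : Set (Fin n)), ∃ u ∈ I, IsFreeEdge G v u := by
  rintro v (rfl | rfl | rfl)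
  · exact hG.exists_isFreeEdge hab hac hbc hI
  · exact hG.exists_isFreeEdge hab.symm hbc hac (Set.insert_comm a v {c} ▸ hI)
  · exact hG.exists_isFreeEdge hac.symm hbc.symm hab (by rwa [Set.insert_comm v, Set.pair_comm v])

/-- Every vertex of a separating triangle is incident to a free edge (an edge
lying on no separating triangle) inside the triangle.  Here a "side" I of the
triangle is a nonempty set of vertices, disjoint from the triangle, whose only
outside neighbours are triangle vertices; the interior is such a side. -/
theorem sepTriangle_free_edge_inside
    (n : ℕ) (G : SimpleGraph (Fin n)) (hG : IsTriangulation G)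
    (a b c : Fin n) (hD : IsSepTriangle G a b c)
    (I : Set (Fin n)) (hne : I.Nonempty)
    (hIdisj : ∀ x ∈ I, x ∉ ({a, b, c} : Set (Fin n)))
    (hIclosed : ∀ x ∈ I, ∀ y : Fin n, G.Adj x y →
      y ∈ I ∨ y ∈ ({a, b, c} : Set (Fin n)))
    (hIconn : (G.induce I).Connected) :
    ∀ v ∈ ({a, b, c} : Set (Fin n)), ∃ u ∈ I, G.Adj v u ∧
      ¬ ∃ x y z : Fin n, IsSepTriangle G x y z ∧
        s(v, u) ∈ ({s(x, y), s(y, z), s(x, z)} : Set (Sym2 (Fin n))) := by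
  exact sepTriangle_free_edge_inside_general hG hD.1 hD.2.1 hD.2.2.1
    ⟨hne, Set.disjoint_left.2 hIdisj, hIclosed⟩
end
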